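/- arXiv:math/0702156 — 3 statements merged into one kernel-verified Lean document; each statement's English description precedes it below -/
import Mathlib

section
/- Let p ≥ 7 be an odd integer. There exists ρ₂ ∈ (0,1) with the following property: for every natural number N there exists C > 0 such that, whenever c > C and u : [0,1] → ℝ is continuous, real-analytic at ρ = 0 with u(0) = c and u'(0) = 0, and satisfies the self-similar profile equation (1−ρ²)u''(ρ) + (2/ρ − (2+2α)ρ)u'(ρ) − α(α+1)u(ρ) + u(ρ)^p = 0 for all ρ ∈ (0,1), the set { ρ ∈ (0, ρ₂) : u(ρ) = b∞ ρ^{−α} } has at least N elements. -/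
open Set Real Filter

/-- The exponent `α = 2/(p-1)`. -/
noncomputable def alphaP (p : ℕ) : ℝ := 2 / ((p : ℝ) - 1)

/-- `b₀ = (2(p+1)/(p-1)²)^(1/(p-1))`, the constant solution. -/
noncomputable def bZero (p : ℕ) : ℝ :=
  (2 * ((p : ℝ) + 1) / ((p : ℝ) - 1) ^ 2) ^ ((1 : ℝ) / ((p : ℝ) - 1))

/-- `b∞ = (2(p-3)/(p-1)²)^(1/(p-1))`. -/
noncomputable def bInfty (p : ℕ) : ℝ :=
  (2 * ((p : ℝ) - 3) / ((p : ℝ) - 1) ^ 2) ^ ((1 : ℝ) / ((p : ℝ) - 1))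

/-- The singular static solution `u∞(ρ) = b∞ ρ^(-α)`. -/
noncomputable def uInfty (p : ℕ) (ρ : ℝ) : ℝ := bInfty p * ρ ^ (-(alphaP p))

/-- The self-similar profile equation
`(1-ρ²)u'' + (2/ρ - (2+2α)ρ)u' - α(α+1)u + u^p = 0` at the point `ρ`. -/
def ProfileEq (p : ℕ) (u : ℝ → ℝ) (ρ : ℝ) : Prop :=
  (1 - ρ ^ 2) * deriv (deriv u) ρ + (2 / ρ - (2 + 2 * alphaP p) * ρ) * deriv u ρ
    - alphaP p * (alphaP p + 1) * u ρ + u ρ ^ p = 0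

/-!
In the variables `t = log ρ` and `Y = u / u∞` the profile equation becomes an almost autonomous
second-order system whose rest point `Y = 1` is the singular solution. On the core
`ρ ≤ (α/2) c^(-1/α)` the solution keeps a height comparable to `c`; at the edge of the core the
energy of the system is negative, by a definite multiple of `Y²`, and since the energy decreases
while its potential is at least `-κ Y² / 2`, `Y` stays above a positive constant independent of `c`
from there on. As long as `Y ≠ 1`, the quotient `q = Y' / (Y - 1)` solves a Riccati equation which
forces it to `-∞` in bounded time, so `Y` takes the value `1` in every window of some fixed length
`τ`. The interval between the edge of the core and `log ρ₂` has length of order `log c` and contains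
as many disjoint windows as desired.

The hypothesis on `u` is written with `deriv`, which is `0` where the derivative does not exist, so
that the differentiability of `u` and `u'` has to be extracted from the equation first.
-/

open scoped Topology

lemma monotoneOn_of_hasDerivAt_nonneg {f f' : ℝ → ℝ} {s : Set ℝ} (hs : Convex ℝ s)
    (hf : ∀ x ∈ s, HasDerivAt f (f' x) x) (hf' : ∀ x ∈ s, 0 ≤ f' x) : MonotoneOn f s :=
  monotoneOn_of_hasDerivWithinAt_nonneg hs (HasDerivAt.continuousOn hf)
    (fun x hx => (hf x (interior_subset hx)).hasDerivWithinAt)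
    fun x hx => hf' x (interior_subset hx)

lemma antitoneOn_of_hasDerivAt_nonpos {f f' : ℝ → ℝ} {s : Set ℝ} (hs : Convex ℝ s)
    (hf : ∀ x ∈ s, HasDerivAt f (f' x) x) (hf' : ∀ x ∈ s, f' x ≤ 0) : AntitoneOn f s :=
  antitoneOn_of_hasDerivWithinAt_nonpos hs (HasDerivAt.continuousOn hf)
    (fun x hx => (hf x (interior_subset hx)).hasDerivWithinAt)
    fun x hx => hf' x (interior_subset hx)

/-! ### Differentiability from equations between junk-valued derivatives -/

lemma differentiableAt_of_deriv_deriv_ne_zero {u : ℝ → ℝ} {x : ℝ} (hu : ContinuousAt u x)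
    (h : deriv (deriv u) x ≠ 0) : DifferentiableAt ℝ u x := by
  by_contra hn
  have hu' : DifferentiableAt ℝ (deriv u) x :=
    not_imp_comm.1 deriv_zero_of_not_differentiableAt h
  have hne : ∀ᶠ z in 𝓝[≠] x, deriv u z ≠ 0 := hu'.hasDerivAt.eventually_ne h
  have hdiff : DifferentiableOn ℝ u {z | deriv u z ≠ 0} := fun z hz =>
    (not_imp_comm.1 deriv_zero_of_not_differentiableAt hz).differentiableWithinAt
  have hlim : Tendsto (deriv u) (𝓝 x) (𝓝 0) := by
    simpa only [deriv_zero_of_not_differentiableAt hn] using hu'.continuousAt.tendsto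
  have hright := hasDerivWithinAt_Ici_of_tendsto_deriv hdiff hu.continuousWithinAt
    (nhdsWithin_mono x (fun z hz => ne_of_gt hz) hne) (hlim.mono_left nhdsWithin_le_nhds)
  have hleft := hasDerivWithinAt_Iic_of_tendsto_deriv hdiff hu.continuousWithinAt
    (nhdsWithin_mono x (fun z hz => ne_of_lt hz) hne) (hlim.mono_left nhdsWithin_le_nhds)
  have hux := hleft.union hright
  rw [Iic_union_Ici, hasDerivWithinAt_univ] at hux
  exact hn hux.differentiableAt

lemma exists_forall_hasDerivAt_of_continuousOn_Ioo {f : ℝ → ℝ} {A B : ℝ}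
    (hf : ContinuousOn f (Ioo A B)) : ∃ F : ℝ → ℝ, ∀ x ∈ Ioo A B, HasDerivAt F (f x) x := by
  refine ⟨fun x => ∫ t in (A + B) / 2..x, f t, fun x hx => ?_⟩
  have hmid : (A + B) / 2 ∈ Ioo A B := by constructor <;> linarith [hx.1, hx.2]
  exact intervalIntegral.integral_hasDerivAt_right
    (hf.mono (ordConnected_Ioo.uIcc_subset hmid hx)).intervalIntegrable
    (hf.stronglyMeasurableAtFilter isOpen_Ioo x hx) (hf.continuousAt (isOpen_Ioo.mem_nhds hx))

/-- Over every interval `[x, y] ⊆ s`, either `D` takes the same value at both end points, or its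
two end point values are among the values of `q` on `[x, y]`. In this sense `D` only moves along
`q`, so that bounds and Lipschitz constants pass from `q` to `D`. -/
def MovesAlong (D q : ℝ → ℝ) (s : Set ℝ) : Prop :=
  ∀ x ∈ s, ∀ y ∈ s, x ≤ y →
    D x = D y ∨ ∃ x' ∈ Icc x y, ∃ y' ∈ Icc x y, D x = q x' ∧ D y = q y'

lemma MovesAlong.mono {D q : ℝ → ℝ} {s t : Set ℝ} (h : MovesAlong D q t) (hst : s ⊆ t) :
    MovesAlong D q s :=
  fun x hx y hy => h x (hst hx) y (hst hy)

lemma MovesAlong.exists_abs_le {D q : ℝ → ℝ} {x y : ℝ} (h : MovesAlong D q (Icc x y))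
    (hq : ContinuousOn q (Icc x y)) : ∃ M, ∀ z ∈ Icc x y, |D z| ≤ M := by
  obtain ⟨M, hM⟩ := isCompact_Icc.exists_bound_of_continuousOn hq
  refine ⟨max |D x| M, fun z hz => ?_⟩
  rcases h x (left_mem_Icc.2 (hz.1.trans hz.2)) z hz hz.1 with heq | ⟨-, -, z', hz', -, heq⟩
  · exact heq ▸ le_max_left _ _
  · exact heq ▸ (hM z' ⟨hz'.1, hz'.2.trans hz.2⟩).trans (le_max_right _ _)

lemma MovesAlong.lipschitzOnWith {D q : ℝ → ℝ} {x y : ℝ} {K : NNReal}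
    (h : MovesAlong D q (Icc x y)) (hq : LipschitzOnWith K q (Icc x y)) :
    LipschitzOnWith K D (Icc x y) := by
  have hle : ∀ z ∈ Icc x y, ∀ w ∈ Icc x y, z ≤ w → dist (D z) (D w) ≤ K * dist z w := by
    intro z hz w hw hzw
    rcases h z hz w hw hzw with heq | ⟨z', hz', w', hw', hDz, hDw⟩
    · rw [heq, dist_self]
      positivity
    · have hsub : Icc z w ⊆ Icc x y := Icc_subset_Icc hz.1 hw.2
      calc dist (D z) (D w) = dist (q z') (q w') := by rw [hDz, hDw]
        _ ≤ K * dist z' w' := hq.dist_le_mul z' (hsub hz') w' (hsub hw')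
        _ ≤ K * dist z w := by
          gcongr
          rw [dist_comm z w, Real.dist_eq w z, abs_of_nonneg (sub_nonneg.2 hzw)]
          exact Real.dist_le_of_mem_Icc hz' hw'
  refine LipschitzOnWith.of_dist_le_mul fun z hz w hw => ?_
  rcases le_total z w with hzw | hwz
  · exact hle z hz w hw hzw
  · rw [dist_comm, dist_comm z]
    exact hle w hw z hz hwz

lemma eq_of_lipschitzOnWith_of_deriv_eq_zero {D : ℝ → ℝ} {x y : ℝ} {K : NNReal} (hxy : x ≤ y)
    (hD : LipschitzOnWith K D (Icc x y)) (hD' : ∀ z ∈ Icc x y, deriv D z = 0) : D x = D y := by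
  rw [← uIcc_of_le hxy] at hD hD'
  have hac : AbsolutelyContinuousOnInterval D x y := hD.absolutelyContinuousOnInterval
  obtain ⟨C, hC⟩ := hac.const_of_ae_hasDerivAt_zero <| by
    filter_upwards [hac.ae_differentiableAt] with z hz hzI
    exact hD' z hzI ▸ (hz hzI).hasDerivAt
  rw [hC x left_mem_uIcc, hC y right_mem_uIcc]

section ConstOffContact

variable {D q : ℝ → ℝ} {A B : ℝ}

lemma eq_of_forall_ne_of_deriv_eq_zero (hD' : ∀ x ∈ Ioo A B, deriv D x = 0)
    (hdiff : ∀ x ∈ Ioo A B, D x ≠ q x → DifferentiableAt ℝ D x)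
    (hend : ∀ x ∈ Ioo A B, ∀ y ∈ Ioo A B, x < y → ∀ d, (∀ z ∈ Ioo x y, D z = d) →
      D x = d ∧ D y = d)
    {x y : ℝ} (hx : x ∈ Ioo A B) (hy : y ∈ Ioo A B) (hxy : x ≤ y)
    (hne : ∀ z ∈ Ioo x y, D z ≠ q z) : D x = D y := by
  rcases hxy.eq_or_lt with rfl | hxy
  · rfl
  have hsub : Ioo x y ⊆ Ioo A B := Ioo_subset_Ioo hx.1.le hy.2.le
  obtain ⟨m, hm⟩ := nonempty_Ioo.2 hxy
  obtain ⟨hDx, hDy⟩ := hend x hx y hy hxy (D m) fun z hz =>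
    isOpen_Ioo.is_const_of_deriv_eq_zero isPreconnected_Ioo
      (fun w hw => (hdiff w (hsub hw) (hne w hw)).differentiableWithinAt)
      (fun w hw => hD' w (hsub hw)) hz hm
  rw [hDx, hDy]

lemma isCompact_contact (hq : ContinuousOn q (Ioo A B))
    (hdiff : ∀ x ∈ Ioo A B, D x ≠ q x → DifferentiableAt ℝ D x) {x y : ℝ}
    (hsub : Icc x y ⊆ Ioo A B) : IsCompact {z ∈ Icc x y | D z = q z} := by
  refine isCompact_Icc.of_isClosed_subset ?_ (sep_subset _ _)
  rw [← isOpen_compl_iff, isOpen_iff_mem_nhds]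
  intro z hz
  by_cases hzI : z ∈ Icc x y
  · have hne : D z ≠ q z := fun heq => hz ⟨hzI, heq⟩
    have hzq : ContinuousAt q z := hq.continuousAt (isOpen_Ioo.mem_nhds (hsub hzI))
    filter_upwards [((hdiff z (hsub hzI) hne).continuousAt.ne_iff_eventually_ne hzq).1 hne]
      with w hw hwZ using hw hwZ.2
  · filter_upwards [isClosed_Icc.isOpen_compl.mem_nhds hzI] with w hw hwZ using hw hwZ.1

lemma movesAlong_of_deriv_eq_zero (hq : ContinuousOn q (Ioo A B))
    (hD' : ∀ x ∈ Ioo A B, deriv D x = 0)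
    (hdiff : ∀ x ∈ Ioo A B, D x ≠ q x → DifferentiableAt ℝ D x)
    (hend : ∀ x ∈ Ioo A B, ∀ y ∈ Ioo A B, x < y → ∀ d, (∀ z ∈ Ioo x y, D z = d) →
      D x = d ∧ D y = d) : MovesAlong D q (Ioo A B) := by
  intro x hx y hy hxy
  have hsub : Icc x y ⊆ Ioo A B := ordConnected_Ioo.out hx hy
  set Z : Set ℝ := {z ∈ Icc x y | D z = q z}
  have hZ : IsCompact Z := isCompact_contact hq hdiff hsub
  rcases Z.eq_empty_or_nonempty with hempty | hne
  · refine .inl (eq_of_forall_ne_of_deriv_eq_zero hD' hdiff hend hx hy hxy fun z hz heq => ?_)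
    exact eq_empty_iff_forall_notMem.1 hempty z ⟨Ioo_subset_Icc_self hz, heq⟩
  · obtain ⟨hinf, hinf_eq⟩ := hZ.sInf_mem hne
    obtain ⟨hsup, hsup_eq⟩ := hZ.sSup_mem hne
    refine .inr ⟨sInf Z, hinf, sSup Z, hsup, ?_, ?_⟩
    · rw [← hinf_eq]
      refine eq_of_forall_ne_of_deriv_eq_zero hD' hdiff hend hx (hsub hinf) hinf.1
        fun z hz heq => ?_
      exact hz.2.not_ge (csInf_le hZ.bddBelow ⟨⟨hz.1.le, hz.2.le.trans hinf.2⟩, heq⟩)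
    · rw [← hsup_eq]
      refine (eq_of_forall_ne_of_deriv_eq_zero hD' hdiff hend (hsub hsup) hy hsup.2
        fun z hz heq => ?_).symm
      exact hz.1.not_ge (le_csSup hZ.bddAbove ⟨⟨hsup.1.trans hz.1.le, hz.2.le⟩, heq⟩)

lemma eq_of_deriv_eq_zero_of_movesAlong {a b : ℝ → ℝ} (hD' : ∀ x ∈ Ioo A B, deriv D x = 0)
    (hmove : MovesAlong D q (Ioo A B)) (ha : ContinuousOn a (Ioo A B))
    (hb : ContinuousOn b (Ioo A B)) (hq : ∀ x ∈ Ioo A B, HasDerivAt q (a x + b x * D x) x)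
    {x y : ℝ} (hx : x ∈ Ioo A B) (hy : y ∈ Ioo A B) (hxy : x ≤ y) : D x = D y := by
  have hsub : Icc x y ⊆ Ioo A B := ordConnected_Ioo.out hx hy
  have hmove' := hmove.mono hsub
  obtain ⟨M, hM⟩ := hmove'.exists_abs_le
    fun z hz => (hq z (hsub hz)).continuousAt.continuousWithinAt
  obtain ⟨Ka, hKa⟩ := isCompact_Icc.exists_bound_of_continuousOn (ha.mono hsub)
  obtain ⟨Kb, hKb⟩ := isCompact_Icc.exists_bound_of_continuousOn (hb.mono hsub)
  have hderiv : ∀ z ∈ Icc x y, ‖a z + b z * D z‖ ≤ Ka + Kb * M := fun z hz =>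
    calc ‖a z + b z * D z‖ ≤ ‖a z‖ + ‖b z‖ * ‖D z‖ := by
          simpa only [norm_mul] using norm_add_le (a z) (b z * D z)
      _ ≤ Ka + Kb * M := by
          gcongr
          exacts [hKa z hz, (norm_nonneg _).trans (hKb z hz), hKb z hz, hM z hz]
  have hlip : LipschitzOnWith (Ka + Kb * M).toNNReal q (Icc x y) :=
    (convex_Icc x y).lipschitzOnWith_of_nnnorm_hasDerivWithin_le
      (fun z hz => (hq z (hsub hz)).hasDerivWithinAt)
      (fun z hz => (norm_toNNReal (a := a z + b z * D z)).symm ▸ Real.toNNReal_mono (hderiv z hz))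
  exact eq_of_lipschitzOnWith_of_deriv_eq_zero hxy (hmove'.lipschitzOnWith hlip)
    fun z hz => hD' z (hsub hz)

end ConstOffContact

lemma deriv_eq_at_endpoints {u v : ℝ → ℝ} {x y : ℝ} (hxy : x < y)
    (hu : ∀ z ∈ Icc x y, DifferentiableAt ℝ u z) (hv : ContinuousOn v (Icc x y))
    (h : ∀ z ∈ Ioo x y, deriv u z = v z) : deriv u x = v x ∧ deriv u y = v y := by
  have hx : x ∈ Icc x y := left_mem_Icc.2 hxy.le
  have hy : y ∈ Icc x y := right_mem_Icc.2 hxy.le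
  have hdiff : DifferentiableOn ℝ u (Ioo x y) := fun z hz =>
    (hu z (Ioo_subset_Icc_self hz)).differentiableWithinAt
  have heq : v =ᶠ[𝓝[Ioo x y] x] deriv u ∧ v =ᶠ[𝓝[Ioo x y] y] deriv u := by
    constructor <;> filter_upwards [self_mem_nhdsWithin] with z hz using (h z hz).symm
  have hvx : Tendsto (deriv u) (𝓝[>] x) (𝓝 (v x)) := nhdsWithin_Ioo_eq_nhdsGT hxy ▸
    (((hv x hx).mono_left (nhdsWithin_mono x Ioo_subset_Icc_self)).congr' heq.1)
  have hvy : Tendsto (deriv u) (𝓝[<] y) (𝓝 (v y)) := nhdsWithin_Ioo_eq_nhdsLT hxy ▸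
    (((hv y hy).mono_left (nhdsWithin_mono y Ioo_subset_Icc_self)).congr' heq.2)
  constructor
  · exact (uniqueDiffOn_Ici x x self_mem_Ici).eq_deriv _ (hu x hx).hasDerivAt.hasDerivWithinAt
      (hasDerivWithinAt_Ici_of_tendsto_deriv hdiff (hu x hx).continuousAt.continuousWithinAt
        (Ioo_mem_nhdsGT hxy) hvx)
  · exact (uniqueDiffOn_Iic y y self_mem_Iic).eq_deriv _ (hu y hy).hasDerivAt.hasDerivWithinAt
      (hasDerivWithinAt_Iic_of_tendsto_deriv hdiff (hu y hy).continuousAt.continuousWithinAt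
        (Ioo_mem_nhdsLT hxy) hvy)

section IntegratingFactor

variable {u μ ψ : ℝ → ℝ}

lemma hasDerivAt_mul_deriv_sub_zero {k g : ℝ → ℝ} {x : ℝ} (hμ : HasDerivAt μ (μ x * k x) x)
    (hψ : HasDerivAt ψ (μ x * k x * g x) x)
    (heq : deriv (deriv u) x = k x * (g x - deriv u x)) (hu' : DifferentiableAt ℝ (deriv u) x) :
    HasDerivAt (fun z => μ z * deriv u z - ψ z) 0 x :=
  ((hμ.mul hu'.hasDerivAt).sub hψ).congr_deriv <| by
    rw [heq]
    ring

lemma differentiableAt_deriv_of_mul_deriv_sub {x : ℝ} (hμ0 : ∀ z, μ z ≠ 0)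
    (hμ : DifferentiableAt ℝ μ x) (hψ : DifferentiableAt ℝ ψ x)
    (h : DifferentiableAt ℝ (fun z => μ z * deriv u z - ψ z) x) :
    DifferentiableAt ℝ (deriv u) x := by
  have hu' : deriv u = fun z => (μ z * deriv u z - ψ z + ψ z) / μ z := funext fun z => by
    rw [sub_add_cancel, mul_div_cancel_left₀ _ (hμ0 z)]
  rw [hu']
  exact (h.add hψ).div hμ (hμ0 x)

lemma mul_deriv_sub_eq_at_endpoints {x y d : ℝ} (hxy : x < y) (hμ0 : ∀ z, μ z ≠ 0)
    (hu : ∀ z ∈ Icc x y, DifferentiableAt ℝ u z) (hμ : ContinuousOn μ (Icc x y))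
    (hψ : ContinuousOn ψ (Icc x y)) (h : ∀ z ∈ Ioo x y, μ z * deriv u z - ψ z = d) :
    μ x * deriv u x - ψ x = d ∧ μ y * deriv u y - ψ y = d := by
  obtain ⟨hux, huy⟩ := deriv_eq_at_endpoints hxy hu
    ((continuousOn_const.add hψ).div hμ fun z _ => hμ0 z) (v := fun z => (d + ψ z) / μ z)
    fun z hz => by rw [eq_div_iff (hμ0 z), ← h z hz]; ring
  rw [hux, huy, mul_div_cancel₀ _ (hμ0 x), mul_div_cancel₀ _ (hμ0 y)]
  constructor <;> ring

-- `deriv u` can fail to be differentiable only where `deriv u = g`, since there alone may the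
-- equation hold with a junk value. Off this contact set `μ u' - ψ` is locally constant, on it
-- `μ u' - ψ` agrees with the `C¹` function `μ g - ψ`.
lemma mul_deriv_sub_eq_of_le {k g a b : ℝ → ℝ} {A B : ℝ} (hμ0 : ∀ z, μ z ≠ 0)
    (hμ : ∀ x ∈ Ioo A B, HasDerivAt μ (μ x * k x) x)
    (hψ : ∀ x ∈ Ioo A B, HasDerivAt ψ (μ x * k x * g x) x)
    (hu : ∀ x ∈ Ioo A B, DifferentiableAt ℝ u x) (hk0 : ∀ x ∈ Ioo A B, k x ≠ 0)
    (ha : ContinuousOn a (Ioo A B)) (hb : ContinuousOn b (Ioo A B))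
    (hg : ∀ x ∈ Ioo A B, HasDerivAt g (a x + b x * deriv u x) x)
    (heq : ∀ x ∈ Ioo A B, deriv (deriv u) x = k x * (g x - deriv u x))
    {x y : ℝ} (hx : x ∈ Ioo A B) (hy : y ∈ Ioo A B) (hxy : x ≤ y) :
    μ x * deriv u x - ψ x = μ y * deriv u y - ψ y := by
  have hμc : ContinuousOn μ (Ioo A B) := HasDerivAt.continuousOn hμ
  have hgc : ContinuousOn g (Ioo A B) := HasDerivAt.continuousOn hg
  have hψc : ContinuousOn ψ (Ioo A B) := HasDerivAt.continuousOn hψ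
  set D : ℝ → ℝ := fun z => μ z * deriv u z - ψ z with hD
  set q : ℝ → ℝ := fun z => μ z * g z - ψ z with hq
  have hD' : ∀ z ∈ Ioo A B, deriv D z = 0 := fun z hz => by
    by_cases hDz : DifferentiableAt ℝ D z
    · exact (hasDerivAt_mul_deriv_sub_zero (hμ z hz) (hψ z hz) (heq z hz)
        (differentiableAt_deriv_of_mul_deriv_sub hμ0 (hμ z hz).differentiableAt
          (hψ z hz).differentiableAt hDz)).deriv
    · exact deriv_zero_of_not_differentiableAt hDz
  have hdiff : ∀ z ∈ Ioo A B, D z ≠ q z → DifferentiableAt ℝ D z := fun z hz hne => by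
    refine (hasDerivAt_mul_deriv_sub_zero (hμ z hz) (hψ z hz) (heq z hz)
      (not_imp_comm.1 deriv_zero_of_not_differentiableAt ?_)).differentiableAt
    rw [heq z hz]
    exact mul_ne_zero (hk0 z hz) (sub_ne_zero.2 fun hgu => hne (by simp only [hD, hq, hgu]))
  have hqderiv : ∀ z ∈ Ioo A B, HasDerivAt q (μ z * a z + b z * ψ z + b z * D z) z := fun z hz =>
    (((hμ z hz).mul (hg z hz)).sub (hψ z hz)).congr_deriv (by simp only [hD]; ring)
  refine eq_of_deriv_eq_zero_of_movesAlong hD'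
    (movesAlong_of_deriv_eq_zero ((hμc.mul hgc).sub hψc) hD' hdiff fun v hv w hw hvw d hd => ?_)
    ((hμc.mul ha).add (hb.mul hψc)) hb hqderiv hx hy hxy
  have hsub : Icc v w ⊆ Ioo A B := ordConnected_Ioo.out hv hw
  exact mul_deriv_sub_eq_at_endpoints hvw hμ0 (fun z hz => hu z (hsub hz)) (hμc.mono hsub)
    (hψc.mono hsub) hd

end IntegratingFactor

theorem differentiableAt_deriv_of_deriv_deriv_eq {u k g a b : ℝ → ℝ} {A B : ℝ}
    (hu : ∀ x ∈ Ioo A B, DifferentiableAt ℝ u x) (hk : ContinuousOn k (Ioo A B))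
    (hk0 : ∀ x ∈ Ioo A B, k x ≠ 0) (ha : ContinuousOn a (Ioo A B)) (hb : ContinuousOn b (Ioo A B))
    (hg : ∀ x ∈ Ioo A B, HasDerivAt g (a x + b x * deriv u x) x)
    (heq : ∀ x ∈ Ioo A B, deriv (deriv u) x = k x * (g x - deriv u x)) :
    ∀ x ∈ Ioo A B, DifferentiableAt ℝ (deriv u) x := by
  obtain ⟨κ, hκ⟩ := exists_forall_hasDerivAt_of_continuousOn_Ioo hk
  have hμ : ∀ x ∈ Ioo A B, HasDerivAt (fun x => exp (κ x)) (exp (κ x) * k x) x :=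
    fun x hx => (hκ x hx).exp
  have hμ0 : ∀ x, exp (κ x) ≠ 0 := fun x => exp_ne_zero _
  obtain ⟨ψ, hψ⟩ := exists_forall_hasDerivAt_of_continuousOn_Ioo
    (((HasDerivAt.continuousOn hμ).mul hk).mul (HasDerivAt.continuousOn hg))
  have hconst : ∀ x ∈ Ioo A B, ∀ y ∈ Ioo A B, x ≤ y →
      exp (κ x) * deriv u x - ψ x = exp (κ y) * deriv u y - ψ y := fun x hx y hy =>
    mul_deriv_sub_eq_of_le hμ0 hμ hψ hu hk0 ha hb hg heq hx hy
  intro x hx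
  refine differentiableAt_deriv_of_mul_deriv_sub hμ0 (hμ x hx).differentiableAt
    (hψ x hx).differentiableAt
    ((differentiableAt_const (exp (κ x) * deriv u x - ψ x)).congr_of_eventuallyEq ?_)
  filter_upwards [isOpen_Ioo.mem_nhds hx] with y hy
  exact (le_total x y).elim (fun h => (hconst x hx y hy h).symm) (hconst y hy x hx)

/-! ### Oscillation of the Emden system -/

section Riccati

lemma mul_sub_lt_pi_of_deriv_le {q q' : ℝ → ℝ} {a b k : ℝ} (hab : a ≤ b)
    (hq : ∀ t ∈ Icc a b, HasDerivAt q (q' t) t)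
    (hq' : ∀ t ∈ Icc a b, q' t ≤ -(k * (1 + q t ^ 2))) : k * (b - a) < π := by
  have hanti : AntitoneOn (fun t => arctan (q t) + k * t) (Icc a b) := by
    refine antitoneOn_of_hasDerivAt_nonpos (convex_Icc a b)
      (fun t ht => (hq t ht).arctan.add ((hasDerivAt_id t).const_mul k)) fun t ht => ?_
    have hslope : q' t / (1 + q t ^ 2) ≤ -k := by
      rw [div_le_iff₀ (by positivity), neg_mul]
      exact hq' t ht
    rw [one_div, inv_mul_eq_div, mul_one]
    linarith
  have hab' : arctan (q b) + k * b ≤ arctan (q a) + k * a :=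
    hanti (left_mem_Icc.2 hab) (right_mem_Icc.2 hab) hab
  linarith [arctan_lt_pi_div_two (q a), neg_pi_div_two_lt_arctan (q b)]

variable {q c g : ℝ → ℝ} {a b : ℝ}

lemma riccati_length_lt (hab : a ≤ b)
    (hq : ∀ t ∈ Icc a b, HasDerivAt q (-(q t ^ 2 + c t * q t + g t)) t)
    (hc : ∀ t ∈ Icc a b, c t ∈ Icc 0 1) (hg : ∀ t ∈ Icc a b, 1 / 2 ≤ g t) :
    b - a < 10 * π := by
  have h := mul_sub_lt_pi_of_deriv_le (k := 1 / 10) hab hq fun t ht => ?_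
  · linarith
  obtain ⟨hc0, hc1⟩ := hc t ht
  have hgt := hg t ht
  rcases le_total 0 (q t) with h | h
  · nlinarith [mul_nonneg hc0 h]
  · nlinarith [mul_nonneg (sub_nonneg.2 hc1) (neg_nonneg.2 h), sq_nonneg (q t + 5 / 9)]

lemma riccati_exists_lt {γ : ℝ} (hγ0 : 0 < γ) (hγ1 : γ ≤ 1)
    (hb : b = a + 4 * π / γ)
    (hq : ∀ t ∈ Icc a b, HasDerivAt q (-(q t ^ 2 + c t * q t + g t)) t)
    (hc : ∀ t ∈ Icc a b, c t ∈ Icc 0 1) (hg : ∀ t ∈ Icc a b, γ ≤ g t) :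
    ∃ t ∈ Icc a b, q t < -(γ / 2) := by
  by_contra! hno
  have hab : a ≤ b := by
    rw [hb, le_add_iff_nonneg_right]
    positivity
  have h := mul_sub_lt_pi_of_deriv_le (k := γ / 4) hab hq fun t ht => ?_
  · rw [hb] at h
    field_simp at h
    linarith
  obtain ⟨hc0, hc1⟩ := hc t ht
  have hgt := hg t ht
  have hqt := hno t ht
  rcases le_total 0 (q t) with h | h
  · nlinarith [mul_nonneg hc0 h, sq_nonneg (q t)]
  · nlinarith [mul_nonneg (sub_nonneg.2 hc1) (neg_nonneg.2 h), sq_nonneg (q t)]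

lemma riccati_le {γ : ℝ} (hγ0 : 0 < γ) (hγ1 : γ ≤ 1)
    (hq : ∀ t ∈ Icc a b, HasDerivAt q (-(q t ^ 2 + c t * q t + g t)) t)
    (hc : ∀ t ∈ Icc a b, c t ∈ Icc 0 1) (hg : ∀ t ∈ Icc a b, γ ≤ g t)
    {t : ℝ} (ht : t ∈ Icc (a + 4 * π / γ) b) : q t ≤ -(γ / 2) := by
  have hsub : Icc a (a + 4 * π / γ) ⊆ Icc a b := Icc_subset_Icc_right (ht.1.trans ht.2)
  obtain ⟨s, hs, hqs⟩ := riccati_exists_lt hγ0 hγ1 rfl (fun t ht => hq t (hsub ht))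
    (fun t ht => hc t (hsub ht)) (fun t ht => hg t (hsub ht))
  have hsub' : Icc s b ⊆ Icc a b := Icc_subset_Icc_left hs.1
  refine image_le_of_deriv_right_lt_deriv_boundary
    (HasDerivAt.continuousOn fun t ht => hq t (hsub' ht))
    (fun t ht => (hq t (hsub' (Ico_subset_Icc_self ht))).hasDerivWithinAt) hqs.le
    (fun x => hasDerivAt_const x (-(γ / 2))) (fun x hx hqx => ?_) ⟨hs.2.trans ht.1, ht.2⟩
  have hx' := hsub' (Ico_subset_Icc_self hx)
  rw [hqx]
  nlinarith [mul_nonneg (sub_nonneg.2 (hc x hx').2) hγ0.le, hg x hx']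

end Riccati

lemma le_mul_exp_of_deriv_le_neg_mul {w w' : ℝ → ℝ} {a b δ : ℝ}
    (hw : ∀ t ∈ Icc a b, HasDerivAt w (w' t) t) (hw' : ∀ t ∈ Icc a b, w' t ≤ -δ * w t)
    {t : ℝ} (ht : t ∈ Icc a b) : w t ≤ w a * exp (-δ * (t - a)) := by
  rw [← gronwallBound_ε0]
  exact le_gronwallBound_of_liminf_deriv_right_le (HasDerivAt.continuousOn hw)
    (fun x hx r hr => (hw x (Ico_subset_Icc_self hx)).hasDerivWithinAt.liminf_right_slope_le hr)
    le_rfl (fun x hx => by rw [add_zero]; exact hw' x (Ico_subset_Icc_self hx)) t ht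

section PowerSlope

variable {y : ℝ} {p : ℕ}

lemma sub_one_le_pow_sub_self_div (hy : 1 < y) : (p : ℝ) - 1 ≤ (y ^ p - y) / (y - 1) := by
  rw [le_div_iff₀ (sub_pos.2 hy)]
  linarith [one_add_mul_sub_le_pow (by linarith : -1 ≤ y) p]

lemma self_le_pow_sub_self_div (hp : 2 ≤ p) (hy0 : 0 ≤ y) (hy1 : y < 1) :
    y ≤ (y ^ p - y) / (y - 1) := by
  rw [le_div_iff_of_neg (sub_neg.2 hy1)]
  linarith [pow_le_pow_of_le_one hy0 hy1.le hp, sq y]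

lemma mul_pow_mul_one_sub_le (n : ℕ) (hy0 : 0 < y) : n * y ^ n * (1 - y) ≤ y - y ^ (n + 1) := by
  have hbern : 1 + n * (y⁻¹ - 1) ≤ y⁻¹ ^ n :=
    one_add_mul_sub_le_pow (by linarith [inv_pos.2 hy0]) n
  have h := mul_le_mul_of_nonneg_left hbern (by positivity : 0 ≤ y ^ n * y)
  rw [inv_pow] at h
  field_simp at h
  linarith [pow_succ y n]

lemma sub_one_div_two_le_pow_sub_self_div (hp : 1 < p) (hy : 1 - 1 / (2 * ((p : ℝ) - 1)) ≤ y)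
    (hy1 : y < 1) : ((p : ℝ) - 1) / 2 ≤ (y ^ p - y) / (y - 1) := by
  obtain ⟨n, rfl⟩ : ∃ n, p = n + 1 := ⟨p - 1, by omega⟩
  have hn : (1 : ℝ) ≤ n := by exact_mod_cast (by omega : 1 ≤ n)
  rw [Nat.cast_add_one, add_sub_cancel_right] at *
  have hny : n * (1 - y) ≤ 1 / 2 :=
    calc n * (1 - y) ≤ n * (1 / (2 * n)) := by gcongr; linarith
      _ = 1 / 2 := by field_simp
  have hy0 : 0 < y := by nlinarith
  have hyn : 1 / 2 ≤ y ^ n := by linarith [one_add_mul_sub_le_pow (by linarith : -1 ≤ y) n]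
  rw [le_div_iff_of_neg (sub_neg.2 hy1)]
  nlinarith [mul_pow_mul_one_sub_le n hy0, mul_nonneg (sub_nonneg.2 hn) (sub_nonneg.2 hy1.le),
    mul_le_mul_of_nonneg_right hyn (mul_nonneg (by linarith : (0 : ℝ) ≤ n) (sub_nonneg.2 hy1.le))]

end PowerSlope

/-- `(Y, V)` solves at `t` the profile equation in Emden-Fowler variables: `Y' = V` and
`(1 - e²ᵗ) V' + (1 - 2α - e²ᵗ) V + κ (Yᵖ - Y) = 0`. The singular static solution is the constant
`Y = 1`, and the cone `t < 0` is where the leading coefficient is positive. -/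
structure EmdenAt (α κ : ℝ) (p : ℕ) (Y V : ℝ → ℝ) (t : ℝ) : Prop where
  hasDerivAt_fst : HasDerivAt Y (V t) t
  hasDerivAt_snd : HasDerivAt V
    (-((1 - 2 * α - exp (2 * t)) * V t + κ * (Y t ^ p - Y t)) / (1 - exp (2 * t))) t

namespace EmdenAt

variable {α κ : ℝ} {p : ℕ} {Y V : ℝ → ℝ}

lemma hasDerivAt_div {t : ℝ} (h : EmdenAt α κ p Y V t) (ht : t < 0) (hY : Y t ≠ 1) :
    HasDerivAt (fun s => V s / (Y s - 1)) (-((V t / (Y t - 1)) ^ 2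
      + (1 - 2 * α - exp (2 * t)) / (1 - exp (2 * t)) * (V t / (Y t - 1))
      + κ * ((Y t ^ p - Y t) / (Y t - 1)) / (1 - exp (2 * t)))) t := by
  have hY' : Y t - 1 ≠ 0 := sub_ne_zero.2 hY
  have hexp : 1 - exp (2 * t) ≠ 0 := (sub_pos.2 (exp_lt_one_iff.2 (by linarith))).ne'
  refine (h.hasDerivAt_snd.div (h.hasDerivAt_fst.sub_const 1) hY').congr_deriv ?_
  field_simp
  ring

section Oscillation

variable {a b : ℝ}

lemma friction_mem_Icc (hα : 0 < α) {t : ℝ} (ht : exp (2 * t) ≤ 1 - 2 * α) :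
    (1 - 2 * α - exp (2 * t)) / (1 - exp (2 * t)) ∈ Icc 0 1 :=
  ⟨div_nonneg (by linarith) (by linarith), (div_le_one (by linarith)).2 (by linarith)⟩

lemma neg_of_exp_le (hα : 0 < α) {t : ℝ} (ht : exp (2 * t) ≤ 1 - 2 * α) : t < 0 := by
  linarith [exp_lt_one_iff.1 (by linarith : exp (2 * t) < 1)]

lemma le_div_one_sub_exp {x g t : ℝ} (hx : 0 ≤ x) (hxg : x ≤ g) (ht : t < 0) :
    x ≤ g / (1 - exp (2 * t)) :=
  (le_div_iff₀ (sub_pos.2 (exp_lt_one_iff.2 (by linarith)))).2 <| by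
    nlinarith [mul_nonneg hx (exp_pos (2 * t)).le]

lemma length_lt_of_half_le (hα : 0 < α) (hab : a ≤ b)
    (hexp : ∀ t ∈ Icc a b, exp (2 * t) ≤ 1 - 2 * α)
    (h : ∀ t ∈ Icc a b, EmdenAt α κ p Y V t) (hY : ∀ t ∈ Icc a b, Y t ≠ 1)
    (hg : ∀ t ∈ Icc a b, 1 / 2 ≤ κ * ((Y t ^ p - Y t) / (Y t - 1))) : b - a < 10 * π :=
  riccati_length_lt hab
    (fun t ht => (h t ht).hasDerivAt_div (neg_of_exp_le hα (hexp t ht)) (hY t ht))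
    (fun t ht => friction_mem_Icc hα (hexp t ht))
    fun t ht => le_div_one_sub_exp (by norm_num) (hg t ht) (neg_of_exp_le hα (hexp t ht))

variable (hα : 0 < α) (hexp : ∀ t ∈ Icc a b, exp (2 * t) ≤ 1 - 2 * α)
  (h : ∀ t ∈ Icc a b, EmdenAt α κ p Y V t)
include hα hexp h

lemma length_lt_of_one_lt (hκ0 : 0 ≤ κ) (hκp : 1 ≤ κ * ((p : ℝ) - 1)) (hab : a ≤ b)
    (hY : ∀ t ∈ Icc a b, 1 < Y t) : b - a < 10 * π :=
  length_lt_of_half_le hα hab hexp h (fun t ht => (hY t ht).ne') fun t ht => by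
    linarith [mul_le_mul_of_nonneg_left (sub_one_le_pow_sub_self_div (p := p) (hY t ht)) hκ0]

lemma one_sub_le_exp (hp : 2 ≤ p) (hκ0 : 0 < κ) (hκ1 : κ ≤ 1) {y₀ : ℝ} (hy₀ : 0 < y₀)
    (hY : ∀ t ∈ Icc a b, Y t ∈ Ico y₀ 1) {t : ℝ} (ht : t ∈ Icc (a + 4 * π / (κ * y₀)) b) :
    1 - Y t ≤ exp (-(κ * y₀ / 2) * (t - (a + 4 * π / (κ * y₀)))) := by
  set γ := κ * y₀
  have hγ0 : 0 < γ := mul_pos hκ0 hy₀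
  have hs : a ≤ a + 4 * π / γ := le_add_of_nonneg_right (by positivity)
  have hsub : Icc (a + 4 * π / γ) b ⊆ Icc a b := Icc_subset_Icc_left hs
  have hY_s := hY _ ⟨hs, ht.1.trans ht.2⟩
  have hγ1 : γ ≤ 1 := mul_le_one₀ hκ1 hy₀.le (hY_s.1.trans hY_s.2.le)
  have hV : ∀ r ∈ Icc (a + 4 * π / γ) b, V r / (Y r - 1) ≤ -(γ / 2) := fun r hr =>
    riccati_le hγ0 hγ1
      (fun t ht => (h t ht).hasDerivAt_div (neg_of_exp_le hα (hexp t ht)) (hY t ht).2.ne)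
      (fun t ht => friction_mem_Icc hα (hexp t ht))
      (fun t ht => le_div_one_sub_exp hγ0.le (mul_le_mul_of_nonneg_left ((hY t ht).1.trans
        (self_le_pow_sub_self_div hp (hy₀.le.trans (hY t ht).1) (hY t ht).2)) hκ0.le)
        (neg_of_exp_le hα (hexp t ht))) hr
  have hdecay := le_mul_exp_of_deriv_le_neg_mul (w := fun r => 1 - Y r) (δ := γ / 2)
    (fun r hr => (h r (hsub hr)).hasDerivAt_fst.const_sub 1) (fun r hr => ?_) ht
  · exact hdecay.trans (mul_le_of_le_one_left (exp_pos _).le (by linarith [hY_s.1]))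
  · have hr' := hV r hr
    rw [div_le_iff_of_neg (sub_neg.2 (hY r (hsub hr)).2)] at hr'
    linarith

lemma length_lt_of_lt_one (hp : 2 ≤ p) (hκ0 : 0 < κ) (hκ1 : κ ≤ 1)
    (hκp : 1 ≤ κ * ((p : ℝ) - 1)) {y₀ : ℝ} (hy₀ : 0 < y₀) (hY : ∀ t ∈ Icc a b, Y t ∈ Ico y₀ 1) :
    b - a < 4 * π / (κ * y₀) + 2 * log (2 * ((p : ℝ) - 1)) / (κ * y₀) + 10 * π := by
  set γ := κ * y₀
  have hγ0 : 0 < γ := mul_pos hκ0 hy₀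
  have hp' : (2 : ℝ) ≤ p := by exact_mod_cast hp
  set L := log (2 * ((p : ℝ) - 1))
  have hL : 0 ≤ 2 * L / γ := div_nonneg (mul_nonneg zero_le_two (log_nonneg (by linarith))) hγ0.le
  set s := a + 4 * π / γ + 2 * L / γ
  rcases lt_or_ge b s with hbs | hsb
  · linarith [pi_pos]
  have has : a ≤ s := by
    have : 0 ≤ 4 * π / γ := by positivity
    linarith
  have hsub : Icc s b ⊆ Icc a b := Icc_subset_Icc_left has
  have hnear : ∀ t ∈ Icc s b, 1 - 1 / (2 * ((p : ℝ) - 1)) ≤ Y t := fun t ht => by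
    have hexp_le : exp (-(γ / 2) * (t - (a + 4 * π / γ))) ≤ 1 / (2 * ((p : ℝ) - 1)) :=
      calc _ ≤ exp (-L) := by
            have : γ / 2 * (2 * L / γ) = L := by field_simp
            gcongr
            nlinarith [ht.1]
        _ = 1 / (2 * ((p : ℝ) - 1)) := by rw [exp_neg, exp_log (by linarith), one_div]
    linarith [one_sub_le_exp hα hexp h hp hκ0 hκ1 hy₀ hY (t := t) ⟨by linarith [ht.1], ht.2⟩]
  have hlen := length_lt_of_half_le hα hsb (fun t ht => hexp t (hsub ht))
    (fun t ht => h t (hsub ht)) (fun t ht => (hY t (hsub ht)).2.ne) fun t ht => by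
      linarith [mul_le_mul_of_nonneg_left
        (sub_one_div_two_le_pow_sub_self_div (p := p) hp (hnear t ht) (hY t (hsub ht)).2) hκ0.le]
  linarith

end Oscillation

lemma exists_window (hp : 2 ≤ p) (hα : 0 < α) (hκ0 : 0 < κ) (hκ1 : κ ≤ 1)
    (hκp : 1 ≤ κ * ((p : ℝ) - 1)) {y₀ : ℝ} (hy₀ : 0 < y₀) :
    ∃ τ > 0, ∀ a : ℝ, ∀ Y V : ℝ → ℝ, (∀ t ∈ Icc a (a + τ), exp (2 * t) ≤ 1 - 2 * α) →
      (∀ t ∈ Icc a (a + τ), EmdenAt α κ p Y V t) → (∀ t ∈ Icc a (a + τ), y₀ ≤ Y t) →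
      ∃ t ∈ Icc a (a + τ), Y t = 1 := by
  have hlog : 0 ≤ log (2 * ((p : ℝ) - 1)) := by
    have : (2 : ℝ) ≤ p := by exact_mod_cast hp
    exact log_nonneg (by linarith)
  have hτ : 0 ≤ 4 * π / (κ * y₀) + 2 * log (2 * ((p : ℝ) - 1)) / (κ * y₀) := by positivity
  refine ⟨_, add_pos_of_nonneg_of_pos hτ (by positivity : 0 < 10 * π), fun a Y V hexp h hY => ?_⟩
  set b := a + _
  have hab : a ≤ b := by linarith [pi_pos]
  by_contra! hne
  have hYc : ContinuousOn Y (Icc a b) := HasDerivAt.continuousOn fun t ht => (h t ht).hasDerivAt_fst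
  have hconn : IsPreconnected (Y '' Icc a b) := isPreconnected_Icc.image Y hYc
  have hside : (∀ t ∈ Icc a b, Y t < 1) ∨ ∀ t ∈ Icc a b, 1 < Y t := by
    by_contra! ⟨⟨s, hs, hs1⟩, ⟨t, ht, ht1⟩⟩
    obtain ⟨r, hr, hr1⟩ := hconn.Icc_subset (mem_image_of_mem Y ht) (mem_image_of_mem Y hs)
      ⟨ht1, hs1⟩
    exact hne r hr hr1
  rcases hside with hlt | hgt
  · linarith [length_lt_of_lt_one hα hexp h hp hκ0 hκ1 hκp hy₀ fun t ht => ⟨hY t ht, hlt t ht⟩]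
  · linarith [length_lt_of_one_lt hα hexp h hκ0.le hκp hab hgt]

end EmdenAt

/-- The energy of the Emden system with potential `κ (Yᵖ⁺¹/(p+1) - Y²/2)`; the weight of the kinetic
part is the leading coefficient of the equation. -/
noncomputable def emdenEnergy (κ : ℝ) (p : ℕ) (Y V : ℝ → ℝ) (t : ℝ) : ℝ :=
  (1 - exp (2 * t)) * V t ^ 2 / 2 + κ * (Y t ^ (p + 1) / (p + 1) - Y t ^ 2 / 2)

section Energy

variable {α κ : ℝ} {p : ℕ} {Y V : ℝ → ℝ}

lemma hasDerivAt_emdenEnergy {t : ℝ} (ht : t < 0) (h : EmdenAt α κ p Y V t) :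
    HasDerivAt (emdenEnergy κ p Y V) (-((1 - 2 * α) * V t ^ 2)) t := by
  have hexp : 1 - exp (2 * t) ≠ 0 := (sub_pos.2 (exp_lt_one_iff.2 (by linarith))).ne'
  have hp : (p : ℝ) + 1 ≠ 0 := by positivity
  have hweight : HasDerivAt (fun s => 1 - exp (2 * s)) (-(exp (2 * t) * (2 * 1))) t :=
    (((hasDerivAt_id t).const_mul 2).exp).const_sub 1
  refine (((hweight.mul (h.hasDerivAt_snd.pow 2)).div_const 2).add
    ((((h.hasDerivAt_fst.pow (p + 1)).div_const ((p : ℝ) + 1)).sub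
      ((h.hasDerivAt_fst.pow 2).div_const 2)).const_mul κ)).congr_deriv ?_
  simp only [Pi.pow_apply, Nat.cast_add, Nat.cast_one, Nat.add_sub_cancel, Nat.cast_ofNat]
  field_simp
  ring

lemma antitoneOn_emdenEnergy (hα : α ≤ 1 / 2) {s : Set ℝ} (hs : Convex ℝ s) (hneg : ∀ t ∈ s, t < 0)
    (h : ∀ t ∈ s, EmdenAt α κ p Y V t) : AntitoneOn (emdenEnergy κ p Y V) s :=
  antitoneOn_of_hasDerivAt_nonpos hs (fun t ht => hasDerivAt_emdenEnergy (hneg t ht) (h t ht))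
    fun _ _ => neg_nonpos.2 (mul_nonneg (by linarith) (sq_nonneg _))

lemma neg_le_emdenEnergy (hκ : 0 ≤ κ) {t : ℝ} (ht : t ≤ 0) (hY : 0 ≤ Y t) :
    -(κ * Y t ^ 2 / 2) ≤ emdenEnergy κ p Y V t := by
  have hexp : exp (2 * t) ≤ 1 := exp_le_one_iff.2 (by linarith)
  have hkinetic : 0 ≤ (1 - exp (2 * t)) * V t ^ 2 / 2 :=
    div_nonneg (mul_nonneg (by linarith) (sq_nonneg _)) zero_le_two
  have hpot : 0 ≤ κ * (Y t ^ (p + 1) / (p + 1)) := by positivity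
  rw [emdenEnergy]
  linarith

lemma emdenEnergy_le {t A B : ℝ} (hp : p ≠ 0) (hV : V t ^ 2 ≤ A * Y t ^ 2)
    (hY : κ * Y t ^ (p - 1) ≤ B) :
    emdenEnergy κ p Y V t ≤ (A / 2 + B / (p + 1) - κ / 2) * Y t ^ 2 := by
  have hkinetic : (1 - exp (2 * t)) * V t ^ 2 ≤ V t ^ 2 :=
    mul_le_of_le_one_left (sq_nonneg _) (by linarith [exp_pos (2 * t)])
  have hpot : κ * (Y t ^ (p + 1) / (p + 1)) ≤ B / (p + 1) * Y t ^ 2 := by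
    rw [show p + 1 = p - 1 + 2 by omega, pow_add]
    calc κ * (Y t ^ (p - 1) * Y t ^ 2 / (p + 1)) = κ * Y t ^ (p - 1) * (Y t ^ 2 / (p + 1)) := by
          ring
      _ ≤ B * (Y t ^ 2 / (p + 1)) := by gcongr
      _ = B / (p + 1) * Y t ^ 2 := by ring
  rw [emdenEnergy]
  linarith

end Energy

/-! ### The singular solution and the core radius -/

section Constants

variable {p : ℕ}

lemma alphaP_mul_sub_one (hp : 1 < p) : alphaP p * ((p : ℝ) - 1) = 2 :=
  div_mul_cancel₀ 2 (sub_pos.2 (by exact_mod_cast hp)).ne'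

lemma alphaP_pos (hp : 1 < p) : 0 < alphaP p :=
  div_pos two_pos (sub_pos.2 (by exact_mod_cast hp))

lemma alphaP_le_half (hp : 5 ≤ p) : alphaP p ≤ 1 / 2 := by
  have : (5 : ℝ) ≤ p := by exact_mod_cast hp
  rw [alphaP, div_le_iff₀] <;> linarith

lemma alphaP_le_two_fifths (hp : 6 ≤ p) : alphaP p ≤ 2 / 5 := by
  have : (6 : ℝ) ≤ p := by exact_mod_cast hp
  rw [alphaP, div_le_iff₀] <;> linarith

lemma inv_add_one_le_alphaP_div_two (hp : 1 < p) : ((p : ℝ) + 1)⁻¹ ≤ alphaP p / 2 := by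
  have : (1 : ℝ) < p := by exact_mod_cast hp
  rw [alphaP, div_div_cancel_left' two_ne_zero]
  gcongr
  linarith

lemma two_mul_sub_three_div_sq (hp : 1 < p) :
    2 * ((p : ℝ) - 3) / ((p : ℝ) - 1) ^ 2 = alphaP p * (1 - alphaP p) := by
  have : (p : ℝ) - 1 ≠ 0 := (sub_pos.2 (by exact_mod_cast hp)).ne'
  rw [alphaP]
  field_simp
  ring

lemma alphaP_mul_one_sub_pos (hp : 3 < p) : 0 < alphaP p * (1 - alphaP p) := by
  have : (3 : ℝ) < p := by exact_mod_cast hp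
  rw [← two_mul_sub_three_div_sq (by omega)]
  exact div_pos (by linarith) (pow_pos (by linarith) 2)

lemma bInfty_pos (hp : 3 < p) : 0 < bInfty p := by
  rw [bInfty, two_mul_sub_three_div_sq (by omega)]
  exact rpow_pos_of_pos (alphaP_mul_one_sub_pos hp) _

lemma bInfty_pow (hp : 3 < p) : bInfty p ^ (p - 1) = alphaP p * (1 - alphaP p) := by
  have hcast : (p : ℝ) - 1 = ((p - 1 : ℕ) : ℝ) := by rw [Nat.cast_pred (by omega)]
  rw [bInfty, two_mul_sub_three_div_sq (by omega), hcast, one_div,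
    rpow_inv_natCast_pow (alphaP_mul_one_sub_pos hp).le (by omega)]

lemma uInfty_pos (hp : 3 < p) {ρ : ℝ} (hρ : 0 < ρ) : 0 < uInfty p ρ :=
  mul_pos (bInfty_pos hp) (rpow_pos_of_pos hρ _)

lemma uInfty_pow (hp : 3 < p) {ρ : ℝ} (hρ : 0 < ρ) :
    uInfty p ρ ^ (p - 1) = alphaP p * (1 - alphaP p) / ρ ^ 2 := by
  have hexp : -alphaP p * ((p - 1 : ℕ) : ℝ) = -2 := by
    rw [Nat.cast_pred (by omega)]
    linarith [alphaP_mul_sub_one (p := p) (by omega)]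
  rw [uInfty, mul_pow, bInfty_pow hp, ← rpow_mul_natCast hρ.le, hexp, rpow_neg hρ.le, rpow_two,
    div_eq_mul_inv]

lemma uInfty_le_uInfty (hp : 3 < p) {ρ ρ' : ℝ} (hρ : 0 < ρ) (h : ρ ≤ ρ') :
    uInfty p ρ' ≤ uInfty p ρ :=
  mul_le_mul_of_nonneg_left
    (rpow_le_rpow_of_nonpos hρ h (neg_nonpos.2 (alphaP_pos (by omega)).le)) (bInfty_pos hp).le

lemma hasDerivAt_uInfty_exp (p : ℕ) (t : ℝ) :
    HasDerivAt (fun s => uInfty p (exp s)) (-alphaP p * uInfty p (exp t)) t := by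
  refine (((hasDerivAt_exp t).rpow_const (p := -alphaP p) (.inl (exp_ne_zero t))).const_mul
    (bInfty p)).congr_deriv ?_
  rw [rpow_sub_one (exp_ne_zero t), uInfty]
  field_simp

lemma div_uInfty_pow_sub_one (hp : 3 < p) {ρ : ℝ} (hρ : 0 < ρ) (x : ℝ) :
    alphaP p * (1 - alphaP p) * (x / uInfty p ρ) ^ (p - 1) = ρ ^ 2 * x ^ (p - 1) := by
  have hκ := (alphaP_mul_one_sub_pos hp).ne'
  rw [div_pow, uInfty_pow hp hρ, div_div_eq_mul_div, mul_div_cancel₀ _ hκ, mul_comm]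

lemma div_uInfty_pow (hp : 3 < p) {ρ : ℝ} (hρ : 0 < ρ) (x : ℝ) :
    alphaP p * (1 - alphaP p) * (x / uInfty p ρ) ^ p = ρ ^ 2 * x ^ p / uInfty p ρ := by
  have hsucc := fun y : ℝ => pow_sub_one_mul (by omega : p ≠ 0) y
  rw [← hsucc, ← mul_assoc, div_uInfty_pow_sub_one hp hρ, ← hsucc x]
  ring

/-- The radius `(α/2) c^(-1/α)` of the core of the profile starting at height `c`: there the profile
still has height comparable to `c`, while the nonlinearity is dominated by the linear terms. -/
noncomputable def innerRadius (p : ℕ) (c : ℝ) : ℝ := alphaP p / 2 * c ^ (-(alphaP p)⁻¹)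

variable {c : ℝ}

lemma innerRadius_pos (hp : 1 < p) (hc : 0 < c) : 0 < innerRadius p c :=
  mul_pos (half_pos (alphaP_pos hp)) (rpow_pos_of_pos hc _)

lemma innerRadius_le (hp : 1 < p) (hc : 1 ≤ c) : innerRadius p c ≤ alphaP p / 2 :=
  mul_le_of_le_one_right (half_pos (alphaP_pos hp)).le
    (rpow_le_one_of_one_le_of_nonpos hc (neg_nonpos.2 (inv_pos.2 (alphaP_pos hp)).le))

lemma log_innerRadius (hp : 1 < p) (hc : 0 < c) :
    log (innerRadius p c) = log (alphaP p / 2) - (alphaP p)⁻¹ * log c := by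
  rw [innerRadius, log_mul (half_pos (alphaP_pos hp)).ne' (rpow_pos_of_pos hc _).ne', log_rpow hc]
  ring

lemma innerRadius_sq_mul_pow (hp : 1 < p) (hc : 0 < c) :
    innerRadius p c ^ 2 * c ^ (p - 1) = (alphaP p / 2) ^ 2 := by
  have hexp : -(alphaP p)⁻¹ * (2 : ℕ) + ((p - 1 : ℕ) : ℝ) = 0 := by
    have := (alphaP_pos hp).ne'
    rw [Nat.cast_pred (by omega), ← mul_right_inj' this, mul_zero]
    field_simp
    push_cast
    linarith [alphaP_mul_sub_one hp]
  rw [innerRadius, mul_pow, mul_assoc, ← rpow_mul_natCast hc.le, ← rpow_natCast c (p - 1),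
    ← rpow_add hc, hexp, rpow_zero, mul_one]

lemma uInfty_innerRadius (hp : 1 < p) (hc : 0 < c) :
    uInfty p (innerRadius p c) = c * uInfty p (alphaP p / 2) := by
  have hα := alphaP_pos hp
  have hexp : -(alphaP p)⁻¹ * -alphaP p = 1 := by field_simp
  rw [uInfty, uInfty, innerRadius, mul_rpow (half_pos hα).le (rpow_nonneg hc.le _),
    ← rpow_mul hc.le, hexp, rpow_one]
  ring

end Constants

/-! ### Solutions above height one -/

/-- The integrating factor `ρ² (1-ρ²)^α` of the first-order part of the profile equation. -/
noncomputable def fluxWeight (α ρ : ℝ) : ℝ := ρ ^ 2 * (1 - ρ ^ 2) ^ α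

section FluxWeight

variable {α ρ : ℝ}

lemma fluxWeight_pos (h0 : 0 < ρ) (h1 : ρ < 1) : 0 < fluxWeight α ρ :=
  mul_pos (pow_pos h0 2) (rpow_pos_of_pos (by nlinarith) _)

lemma fluxWeight_le_sq (hα : 0 ≤ α) (h0 : 0 ≤ ρ) (h1 : ρ ≤ 1) : fluxWeight α ρ ≤ ρ ^ 2 :=
  mul_le_of_le_one_right (sq_nonneg ρ) (rpow_le_one (by nlinarith) (by nlinarith) hα)

lemma sq_mul_one_sub_sq_le_fluxWeight (hα : α ≤ 1) (h0 : 0 ≤ ρ) (h1 : ρ < 1) :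
    ρ ^ 2 * (1 - ρ ^ 2) ≤ fluxWeight α ρ :=
  mul_le_mul_of_nonneg_left (self_le_rpow_of_le_one (by nlinarith) (by nlinarith) hα) (sq_nonneg ρ)

lemma hasDerivAt_fluxWeight (h0 : 0 < ρ) (h1 : ρ < 1) :
    HasDerivAt (fluxWeight α)
      (fluxWeight α ρ * (2 / ρ - (2 + 2 * α) * ρ) / (1 - ρ ^ 2)) ρ := by
  have hpos : 0 < 1 - ρ ^ 2 := by nlinarith
  have hbase : HasDerivAt (fun x : ℝ => 1 - x ^ 2) (-(2 * ρ)) ρ := by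
    simpa using (hasDerivAt_pow 2 ρ).const_sub 1
  refine ((hasDerivAt_pow 2 ρ).mul (hbase.rpow_const (p := α) (.inl hpos.ne'))).congr_deriv ?_
  rw [rpow_sub_one hpos.ne', fluxWeight]
  field_simp
  push_cast
  ring

end FluxWeight

lemma exists_sq_mul_deriv_lt {v v' : ℝ → ℝ} {r w : ℝ} (hr : 0 < r) (hw : 0 < w)
    (hv : ContinuousWithinAt v (Ioi 0) 0) (hv' : ∀ x ∈ Ioo 0 r, HasDerivAt v (v' x) x) :
    ∃ x ∈ Ioo 0 r, x ^ 2 * v' x < w := by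
  by_contra! hge
  have hmono : MonotoneOn (fun x => v x + w * x⁻¹) (Ioo 0 r) := by
    refine monotoneOn_of_hasDerivAt_nonneg (convex_Ioo 0 r) (fun x hx =>
      (hv' x hx).add ((hasDerivAt_inv hx.1.ne').const_mul w)) fun x hx => ?_
    have hx2 : 0 < x ^ 2 := pow_pos hx.1 2
    rw [mul_neg, ← sub_eq_add_neg, sub_nonneg, ← div_eq_mul_inv, div_le_iff₀ hx2, mul_comm]
    exact hge x hx
  have hr2 : r / 2 ∈ Ioo 0 r := ⟨half_pos hr, half_lt_self hr⟩
  have hbot : Tendsto v (𝓝[>] 0) atBot := by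
    refine tendsto_atBot_mono' _ ?_ (tendsto_atBot_add_const_left _ (v (r / 2) + w * (r / 2)⁻¹)
      (tendsto_neg_atTop_atBot.comp (tendsto_inv_nhdsGT_zero.const_mul_atTop hw)))
    filter_upwards [Ioo_mem_nhdsGT hr2.1] with x hx
    have : v x + w * x⁻¹ ≤ v (r / 2) + w * (r / 2)⁻¹ :=
      hmono ⟨hx.1, hx.2.trans hr2.2⟩ hr2 hx.2.le
    simp only [Function.comp_apply]
    linarith
  exact not_tendsto_nhds_of_tendsto_atBot hbot _ hv

lemma exists_fluxWeight_mul_deriv_lt {α : ℝ} (hα : 0 ≤ α) {v v' : ℝ → ℝ} {r w : ℝ} (hr : 0 < r)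
    (hr1 : r ≤ 1) (hw : 0 < w) (hv : ContinuousWithinAt v (Ioi 0) 0)
    (hv' : ∀ x ∈ Ioo 0 r, HasDerivAt v (v' x) x) :
    ∃ x ∈ Ioo 0 r, fluxWeight α x * v' x < w := by
  obtain ⟨x, hx, hxw⟩ := exists_sq_mul_deriv_lt hr hw hv hv'
  refine ⟨x, hx, ?_⟩
  have hx1 : x < 1 := hx.2.trans_le hr1
  rcases le_or_gt (v' x) 0 with hneg | hpos
  · exact (mul_nonpos_of_nonneg_of_nonpos (fluxWeight_pos hx.1 hx1).le hneg).trans_lt hw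
  · exact (mul_le_mul_of_nonneg_right (fluxWeight_le_sq hα hx.1.le hx1.le) hpos.le).trans_lt hxw

lemma hasDerivAt_two_div_sub_mul {x : ℝ} (hx : x ≠ 0) (k : ℝ) :
    HasDerivAt (fun y => 2 / y - k * y) (-(2 / x ^ 2) - k) x :=
  (((hasDerivAt_inv hx).const_mul 2).sub ((hasDerivAt_id x).const_mul k)).congr_deriv (by ring)

/-- `u` is a continuous solution of the profile equation on `(0, R)` starting at height `c`, and it
stays above `1` there, where the nonlinearity dominates the zeroth-order term. -/
structure IsProfileAbove (p : ℕ) (c R : ℝ) (u : ℝ → ℝ) : Prop where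
  radius_le : R ≤ 1 / 2
  continuousOn : ContinuousOn u (Ico 0 R)
  apply_zero : u 0 = c
  one_lt : ∀ ρ ∈ Ioo 0 R, 1 < u ρ
  profileEq : ∀ ρ ∈ Ioo 0 R, ProfileEq p u ρ

namespace IsProfileAbove

variable {p : ℕ} {c R : ℝ} {u : ℝ → ℝ} {ρ : ℝ}

lemma sq_lt (h : IsProfileAbove p c R u) (hρ : ρ ∈ Ioo 0 R) : ρ ^ 2 < 1 / 4 := by
  nlinarith [hρ.1, hρ.2, h.radius_le]

lemma lt_one (h : IsProfileAbove p c R u) (hρ : ρ ∈ Ioo 0 R) : ρ < 1 := by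
  linarith [hρ.2, h.radius_le]

lemma forcing_neg (h : IsProfileAbove p c R u) (hp : 5 ≤ p) (hρ : ρ ∈ Ioo 0 R) :
    alphaP p * (alphaP p + 1) * u ρ - u ρ ^ p < 0 := by
  have hu := h.one_lt ρ hρ
  have hα : alphaP p * (alphaP p + 1) ≤ 3 / 4 := by
    nlinarith [alphaP_pos (p := p) (by omega), alphaP_le_half hp]
  linarith [le_self_pow₀ hu.le (by omega : p ≠ 0),
    mul_le_mul_of_nonneg_right hα (by linarith : 0 ≤ u ρ)]

lemma coeff_pos (h : IsProfileAbove p c R u) (hp : 5 ≤ p) (hρ : ρ ∈ Ioo 0 R) :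
    0 < 2 / ρ - (2 + 2 * alphaP p) * ρ := by
  rw [sub_pos, lt_div_iff₀ hρ.1]
  nlinarith [alphaP_le_half hp, h.sq_lt hρ, sq_nonneg ρ]

lemma differentiableAt (h : IsProfileAbove p c R u) (hp : 5 ≤ p) (hρ : ρ ∈ Ioo 0 R) :
    DifferentiableAt ℝ u ρ := by
  by_contra hn
  refine hn (differentiableAt_of_deriv_deriv_ne_zero (h.continuousOn.continuousAt
    (mem_of_superset (isOpen_Ioo.mem_nhds hρ) Ioo_subset_Ico_self)) fun hzero => ?_)
  have heq := h.profileEq ρ hρ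
  rw [ProfileEq, hzero, deriv_zero_of_not_differentiableAt hn] at heq
  linarith [h.forcing_neg hp hρ]

lemma differentiableAt_deriv (h : IsProfileAbove p c R u) (hp : 5 ≤ p) (hρ : ρ ∈ Ioo 0 R) :
    DifferentiableAt ℝ (deriv u) ρ := by
  set α := alphaP p
  set m : ℝ → ℝ := fun x => 2 / x - (2 + 2 * α) * x
  have hm : ∀ x ∈ Ioo 0 R, m x ≠ 0 := fun x hx => (h.coeff_pos hp hx).ne'
  have hx0 : ∀ x ∈ Ioo 0 R, x ≠ 0 := fun x hx => hx.1.ne'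
  have hx1 : ∀ x ∈ Ioo 0 R, 1 - x ^ 2 ≠ 0 := fun x hx => by linarith [h.sq_lt hx]
  have hmc : ContinuousOn m (Ioo 0 R) :=
    (continuousOn_const.div continuousOn_id hx0).sub (by fun_prop)
  have huc : ContinuousOn u (Ioo 0 R) := h.continuousOn.mono Ioo_subset_Ico_self
  refine differentiableAt_deriv_of_deriv_deriv_eq (k := fun x => m x / (1 - x ^ 2))
    (g := fun x => (α * (α + 1) * u x - u x ^ p) / m x)
    (a := fun x => (α * (α + 1) * u x - u x ^ p) * (2 / x ^ 2 + (2 + 2 * α)) / m x ^ 2)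
    (b := fun x => (α * (α + 1) - p * u x ^ (p - 1)) / m x)
    (fun x hx => h.differentiableAt hp hx) (hmc.div (by fun_prop) hx1)
    (fun x hx => div_ne_zero (hm x hx) (hx1 x hx)) ?_ ?_ (fun x hx => ?_) (fun x hx => ?_) ρ hρ
  · refine (ContinuousOn.mul (by fun_prop) (ContinuousOn.add ?_ (by fun_prop))).div (hmc.pow 2)
      fun x hx => pow_ne_zero 2 (hm x hx)
    exact continuousOn_const.div (by fun_prop) fun x hx => pow_ne_zero 2 (hx0 x hx)
  · exact ContinuousOn.div (by fun_prop) hmc hm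
  · have hu := (h.differentiableAt hp hx).hasDerivAt
    have hm' : HasDerivAt m (-(2 / x ^ 2) - (2 + 2 * α)) x :=
      hasDerivAt_two_div_sub_mul (hx0 x hx) _
    refine (((hu.const_mul (α * (α + 1))).sub (hu.pow p)).div hm' (hm x hx)).congr_deriv ?_
    have := hm x hx
    simp only [Pi.sub_apply, Pi.pow_apply]
    field_simp
    ring
  · have heq := h.profileEq x hx
    have := hm x hx
    have := hx1 x hx
    change (1 - x ^ 2) * deriv (deriv u) x + m x * deriv u x - α * (α + 1) * u x + u x ^ p = 0
      at heq
    field_simp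
    linarith

lemma hasDerivAt_flux (h : IsProfileAbove p c R u) (hp : 5 ≤ p) (hρ : ρ ∈ Ioo 0 R) :
    HasDerivAt (fun x => fluxWeight (alphaP p) x * deriv u x)
      (fluxWeight (alphaP p) ρ / (1 - ρ ^ 2) * (alphaP p * (alphaP p + 1) * u ρ - u ρ ^ p)) ρ := by
  refine ((hasDerivAt_fluxWeight hρ.1 (h.lt_one hρ)).mul
    (h.differentiableAt_deriv hp hρ).hasDerivAt).congr_deriv ?_
  have hρ1 : 1 - ρ ^ 2 ≠ 0 := by linarith [h.sq_lt hρ]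
  have heq := h.profileEq ρ hρ
  rw [ProfileEq] at heq
  rw [← sub_eq_zero]
  calc _ = fluxWeight (alphaP p) ρ / (1 - ρ ^ 2) *
        ((1 - ρ ^ 2) * deriv (deriv u) ρ + (2 / ρ - (2 + 2 * alphaP p) * ρ) * deriv u ρ
          - alphaP p * (alphaP p + 1) * u ρ + u ρ ^ p) := by
        field_simp
        ring
    _ = 0 := by rw [heq, mul_zero]

lemma continuousWithinAt_zero (h : IsProfileAbove p c R u) (hR : 0 < R) :
    ContinuousWithinAt u (Ioi 0) 0 :=
  ((h.continuousOn 0 (left_mem_Ico.2 hR)).mono Ioo_subset_Ico_self).mono_of_mem_nhdsWithin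
    (Ioo_mem_nhdsGT hR)

lemma deriv_nonpos (h : IsProfileAbove p c R u) (hp : 5 ≤ p) (hρ : ρ ∈ Ioo 0 R) :
    deriv u ρ ≤ 0 := by
  by_contra! hpos
  have hanti : AntitoneOn (fun x => fluxWeight (alphaP p) x * deriv u x) (Ioo 0 R) :=
    antitoneOn_of_hasDerivAt_nonpos (convex_Ioo 0 R) (fun x hx => h.hasDerivAt_flux hp hx)
      fun x hx => mul_nonpos_of_nonneg_of_nonpos (div_nonneg (fluxWeight_pos hx.1 (h.lt_one hx)).le
        (by linarith [h.sq_lt hx])) (h.forcing_neg hp hx).le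
  obtain ⟨x, hx, hlt⟩ := exists_fluxWeight_mul_deriv_lt (alphaP_pos (p := p) (by omega)).le hρ.1
    (h.lt_one hρ).le (mul_pos (fluxWeight_pos hρ.1 (h.lt_one hρ)) hpos)
    (h.continuousWithinAt_zero (hρ.1.trans hρ.2))
    fun x hx => (h.differentiableAt hp ⟨hx.1, hx.2.trans hρ.2⟩).hasDerivAt
  exact hlt.not_ge (hanti ⟨hx.1, hx.2.trans hρ.2⟩ hρ hx.2.le)

lemma apply_le (h : IsProfileAbove p c R u) (hp : 5 ≤ p) (hρ : ρ ∈ Ioo 0 R) : u ρ ≤ c := by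
  have hanti : AntitoneOn u (Ico 0 R) := by
    refine antitoneOn_of_deriv_nonpos (convex_Ico 0 R) h.continuousOn ?_ ?_ <;>
      rw [interior_Ico]
    · exact fun x hx => (h.differentiableAt hp hx).differentiableWithinAt
    · exact fun x hx => h.deriv_nonpos hp hx
  rw [← h.apply_zero]
  exact hanti (left_mem_Ico.2 (hρ.1.trans hρ.2)) (Ioo_subset_Ico_self hρ) hρ.1.le

lemma flux_rate_ge (h : IsProfileAbove p c R u) (hp : 5 ≤ p) (hρ : ρ ∈ Ioo 0 R) :
    -(4 / 3 * c ^ p * ρ ^ 2) ≤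
      fluxWeight (alphaP p) ρ / (1 - ρ ^ 2) * (alphaP p * (alphaP p + 1) * u ρ - u ρ ^ p) := by
  have hα := alphaP_pos (p := p) (by omega)
  have hu := h.one_lt ρ hρ
  have hsq := h.sq_lt hρ
  have hpow : u ρ ^ p ≤ c ^ p := pow_le_pow_left₀ (by linarith) (h.apply_le hp hρ) p
  have hcp : 0 ≤ c ^ p := le_trans (by positivity) hpow
  have hforcing : -c ^ p ≤ alphaP p * (alphaP p + 1) * u ρ - u ρ ^ p := by
    have : 0 < alphaP p * (alphaP p + 1) * u ρ := by positivity
    linarith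
  have hweight : fluxWeight (alphaP p) ρ / (1 - ρ ^ 2) ≤ 4 / 3 * ρ ^ 2 := by
    rw [div_le_iff₀ (by linarith)]
    nlinarith [fluxWeight_le_sq hα.le hρ.1.le (h.lt_one hρ).le, sq_nonneg ρ]
  have hweight0 : 0 ≤ fluxWeight (alphaP p) ρ / (1 - ρ ^ 2) :=
    div_nonneg (fluxWeight_pos hρ.1 (h.lt_one hρ)).le (by linarith)
  linarith [mul_le_mul_of_nonneg_left hforcing hweight0, mul_le_mul_of_nonneg_right hweight hcp]

lemma flux_ge (h : IsProfileAbove p c R u) (hp : 5 ≤ p) (hρ : ρ ∈ Ioo 0 R) :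
    -(4 / 9 * c ^ p * ρ ^ 3) ≤ fluxWeight (alphaP p) ρ * deriv u ρ := by
  by_contra! hlt
  have hmono : MonotoneOn
      (fun x => fluxWeight (alphaP p) x * deriv u x + 4 / 9 * c ^ p * x ^ 3) (Ioo 0 R) :=
    monotoneOn_of_hasDerivAt_nonneg (convex_Ioo 0 R) (fun x hx => (h.hasDerivAt_flux hp hx).add
      ((hasDerivAt_pow 3 x).const_mul (4 / 9 * c ^ p))) fun x hx => by
        have := h.flux_rate_ge hp hx
        push_cast
        linarith
  obtain ⟨x, hx, hxlt⟩ := exists_fluxWeight_mul_deriv_lt (alphaP_pos (p := p) (by omega)).le hρ.1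
    (h.lt_one hρ).le (neg_pos.2 (by linarith :
      fluxWeight (alphaP p) ρ * deriv u ρ + 4 / 9 * c ^ p * ρ ^ 3 < 0))
    (h.continuousWithinAt_zero (hρ.1.trans hρ.2)).neg
    fun x hx => (h.differentiableAt hp ⟨hx.1, hx.2.trans hρ.2⟩).hasDerivAt.neg
  have hx' : x ∈ Ioo 0 R := ⟨hx.1, hx.2.trans hρ.2⟩
  have hle := hmono hx' hρ hx.2.le
  have hcube : 0 ≤ c ^ p * x ^ 3 := mul_nonneg
    (pow_nonneg (by linarith [h.one_lt x hx', h.apply_le hp hx']) p) (pow_nonneg hx.1.le 3)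
  simp only at hle
  linarith

lemma neg_le_deriv (h : IsProfileAbove p c R u) (hp : 5 ≤ p) (hρ : ρ ∈ Ioo 0 R) :
    -(c ^ p * ρ) ≤ deriv u ρ := by
  have hcρ : 0 ≤ c ^ p * ρ :=
    mul_nonneg (pow_nonneg (by linarith [h.one_lt ρ hρ, h.apply_le hp hρ]) p) hρ.1.le
  have hweight : 3 / 4 * ρ ^ 2 ≤ fluxWeight (alphaP p) ρ := by
    have := sq_mul_one_sub_sq_le_fluxWeight (α := alphaP p)
      (by linarith [alphaP_le_half hp]) hρ.1.le (h.lt_one hρ)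
    nlinarith [h.sq_lt hρ, sq_nonneg ρ]
  refine le_of_mul_le_mul_left ?_ (fluxWeight_pos (α := alphaP p) hρ.1 (h.lt_one hρ))
  calc fluxWeight (alphaP p) ρ * -(c ^ p * ρ) ≤ 3 / 4 * ρ ^ 2 * -(c ^ p * ρ) :=
        mul_le_mul_of_nonpos_right hweight (neg_nonpos.2 hcρ)
    _ ≤ -(4 / 9 * c ^ p * ρ ^ 3) := by nlinarith [mul_nonneg hcρ (sq_nonneg ρ)]
    _ ≤ fluxWeight (alphaP p) ρ * deriv u ρ := h.flux_ge hp hρ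

lemma sub_le_apply (h : IsProfileAbove p c R u) (hp : 5 ≤ p) (hρ : ρ ∈ Ioo 0 R) :
    c - c ^ p * ρ ^ 2 / 2 ≤ u ρ := by
  have hmono : MonotoneOn (fun x => u x + c ^ p / 2 * x ^ 2) (Ico 0 R) := by
    refine monotoneOn_of_hasDerivWithinAt_nonneg (f' := fun x => deriv u x + c ^ p / 2 * (2 * x))
      (convex_Ico 0 R) (h.continuousOn.add (by fun_prop)) ?_ ?_ <;> rw [interior_Ico] <;>
      intro x hx
    · exact ((h.differentiableAt hp hx).hasDerivAt.add
        (((hasDerivAt_pow 2 x).const_mul (c ^ p / 2)).congr_deriv (by norm_num))).hasDerivWithinAt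
    · linarith [h.neg_le_deriv hp hx]
  have hle := hmono (left_mem_Ico.2 (hρ.1.trans hρ.2)) (Ioo_subset_Ico_self hρ) hρ.1.le
  simp only [h.apply_zero] at hle
  linarith

end IsProfileAbove

/-! ### Emden variables of a profile -/

/-- The profile relative to the singular static solution, as a function of `t = log ρ`. -/
noncomputable def emdenY (p : ℕ) (u : ℝ → ℝ) (t : ℝ) : ℝ := u (exp t) / uInfty p (exp t)

/-- The derivative of `emdenY p u`, written out in terms of `u` and `deriv u`. -/
noncomputable def emdenV (p : ℕ) (u : ℝ → ℝ) (t : ℝ) : ℝ :=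
  (alphaP p * u (exp t) + exp t * deriv u (exp t)) / uInfty p (exp t)

namespace IsProfileAbove

variable {p : ℕ} {c R : ℝ} {u : ℝ → ℝ} {t : ℝ}

lemma hasDerivAt_emdenY (h : IsProfileAbove p c R u) (hp : 5 ≤ p) (ht : exp t ∈ Ioo 0 R) :
    HasDerivAt (emdenY p u) (emdenV p u t) t := by
  have hU := (uInfty_pos (p := p) (by omega) ht.1).ne'
  refine (((h.differentiableAt hp ht).hasDerivAt.comp t (hasDerivAt_exp t)).div
    (hasDerivAt_uInfty_exp p t) hU).congr_deriv ?_
  rw [emdenV, Function.comp_apply]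
  field_simp
  ring

lemma hasDerivAt_emdenV (h : IsProfileAbove p c R u) (hp : 5 ≤ p) (ht : exp t ∈ Ioo 0 R) :
    HasDerivAt (emdenV p u) ((alphaP p ^ 2 * u (exp t)
      + (2 * alphaP p + 1) * exp t * deriv u (exp t) + exp t ^ 2 * deriv (deriv u) (exp t))
        / uInfty p (exp t)) t := by
  have hU := (uInfty_pos (p := p) (by omega) ht.1).ne'
  have hu := (h.differentiableAt hp ht).hasDerivAt.comp t (hasDerivAt_exp t)
  have hu' := (h.differentiableAt_deriv hp ht).hasDerivAt.comp t (hasDerivAt_exp t)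
  refine (((hu.const_mul (alphaP p)).add ((hasDerivAt_exp t).mul hu')).div
    (hasDerivAt_uInfty_exp p t) hU).congr_deriv ?_
  simp only [Pi.add_apply, Pi.mul_apply, Function.comp_apply]
  field_simp
  ring

lemma emdenAt (h : IsProfileAbove p c R u) (hp : 5 ≤ p) (ht : exp t ∈ Ioo 0 R) :
    EmdenAt (alphaP p) (alphaP p * (1 - alphaP p)) p (emdenY p u) (emdenV p u) t := by
  refine ⟨h.hasDerivAt_emdenY hp ht, (h.hasDerivAt_emdenV hp ht).congr_deriv ?_⟩
  have hsq : exp (2 * t) = exp t ^ 2 := exp_nat_mul t 2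
  have hU := (uInfty_pos (p := p) (by omega) ht.1).ne'
  have hexp : 1 - exp t ^ 2 ≠ 0 := by linarith [h.sq_lt ht]
  have heq := h.profileEq _ ht
  rw [ProfileEq] at heq
  rw [mul_sub, emdenY, emdenV, div_uInfty_pow (by omega) ht.1, hsq]
  have := exp_ne_zero t
  field_simp at heq ⊢
  linear_combination exp t * heq

lemma one_lt_height (h : IsProfileAbove p c R u) (hp : 5 ≤ p) (hR : 0 < R) : 1 < c :=
  have hmem : R / 2 ∈ Ioo 0 R := ⟨half_pos hR, half_lt_self hR⟩
  (h.one_lt _ hmem).trans_le (h.apply_le hp hmem)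

lemma half_le_apply (h : IsProfileAbove p c R u) (hp : 5 ≤ p) {ρ : ℝ} (hρ : ρ ∈ Ioo 0 R)
    (hle : ρ ≤ innerRadius p c) : c / 2 ≤ u ρ := by
  have hc : 0 < c := zero_lt_one.trans (h.one_lt_height hp (hρ.1.trans hρ.2))
  have hα := alphaP_pos (p := p) (by omega)
  have hdrop : c ^ p * ρ ^ 2 ≤ c :=
    calc c ^ p * ρ ^ 2 ≤ c ^ p * innerRadius p c ^ 2 := by gcongr; exact hρ.1.le
      _ = (alphaP p / 2) ^ 2 * c := by
        rw [← innerRadius_sq_mul_pow (by omega) hc, ← pow_sub_one_mul (by omega : p ≠ 0) c]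
        ring
      _ ≤ c := mul_le_of_le_one_left hc.le (by nlinarith [alphaP_le_half hp])
  linarith [h.sub_le_apply hp hρ]

end IsProfileAbove

namespace IsProfileAbove

variable {p : ℕ} {c R : ℝ} {u : ℝ → ℝ}

section Core

variable (h : IsProfileAbove p c R u) (hp : 5 ≤ p) (hcR : innerRadius p c ∈ Ioo 0 R)
include h hp hcR

lemma emdenV_log_innerRadius_sq_le :
    emdenV p u (log (innerRadius p c)) ^ 2
      ≤ alphaP p ^ 2 * emdenY p u (log (innerRadius p c)) ^ 2 := by
  have hc : 1 < c := h.one_lt_height hp (hcR.1.trans hcR.2)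
  have hα := alphaP_pos (p := p) (by omega)
  set ρ₀ := innerRadius p c
  have hhalf : c / 2 ≤ u ρ₀ := h.half_le_apply hp hcR le_rfl
  have hslope_nonpos : ρ₀ * deriv u ρ₀ ≤ 0 :=
    mul_nonpos_of_nonneg_of_nonpos hcR.1.le (h.deriv_nonpos hp hcR)
  have hslope_ge : -(2 * (alphaP p * u ρ₀)) ≤ ρ₀ * deriv u ρ₀ :=
    calc -(2 * (alphaP p * u ρ₀)) ≤ -((alphaP p / 2) ^ 2 * c) := by
          nlinarith [mul_le_mul_of_nonneg_left hhalf hα.le, mul_nonneg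
            (mul_pos hα (by linarith : 0 < c)).le (sub_nonneg.2 (alphaP_le_half hp))]
      _ = ρ₀ * -(c ^ p * ρ₀) := by
          rw [← innerRadius_sq_mul_pow (by omega) (by linarith : 0 < c),
            ← pow_sub_one_mul (by omega : p ≠ 0) c]
          ring
      _ ≤ ρ₀ * deriv u ρ₀ := mul_le_mul_of_nonneg_left (h.neg_le_deriv hp hcR) hcR.1.le
  rw [emdenV, emdenY, exp_log hcR.1, ← mul_pow, ← mul_div_assoc, div_pow, div_pow]
  exact div_le_div_of_nonneg_right (sq_le_sq' (by linarith) (by linarith)) (sq_nonneg _)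

lemma emdenY_log_innerRadius_pow_le :
    alphaP p * (1 - alphaP p) * emdenY p u (log (innerRadius p c)) ^ (p - 1)
      ≤ (alphaP p / 2) ^ 2 := by
  have hc : 0 < c := zero_lt_one.trans (h.one_lt_height hp (hcR.1.trans hcR.2))
  have hu : 0 ≤ u (innerRadius p c) := by linarith [h.one_lt _ hcR]
  rw [emdenY, exp_log hcR.1, div_uInfty_pow_sub_one (by omega) hcR.1,
    ← innerRadius_sq_mul_pow (by omega) hc]
  gcongr
  exact h.apply_le hp hcR

lemma le_emdenY_log_innerRadius :
    1 / (2 * uInfty p (alphaP p / 2)) ≤ emdenY p u (log (innerRadius p c)) := by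
  have hc : 0 < c := zero_lt_one.trans (h.one_lt_height hp (hcR.1.trans hcR.2))
  have hU : 0 < uInfty p (alphaP p / 2) :=
    uInfty_pos (by omega) (half_pos (alphaP_pos (by omega)))
  rw [emdenY, exp_log hcR.1, uInfty_innerRadius (by omega) hc,
    div_le_div_iff₀ (by positivity) (by positivity)]
  nlinarith [h.half_le_apply hp hcR le_rfl]

end Core

section Outer

variable (h : IsProfileAbove p c R u) (hp : 6 ≤ p) (hcR : innerRadius p c ∈ Ioo 0 R)
include h hp hcR

lemma emdenEnergy_log_innerRadius_le :
    emdenEnergy (alphaP p * (1 - alphaP p)) p (emdenY p u) (emdenV p u) (log (innerRadius p c))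
      ≤ -(alphaP p / 18) * emdenY p u (log (innerRadius p c)) ^ 2 := by
  have hα := alphaP_pos (p := p) (by omega)
  have hα' := alphaP_le_two_fifths hp
  refine (emdenEnergy_le (by omega) (h.emdenV_log_innerRadius_sq_le (by omega) hcR)
    (h.emdenY_log_innerRadius_pow_le (by omega) hcR)).trans
      (mul_le_mul_of_nonneg_right ?_ (sq_nonneg _))
  calc alphaP p ^ 2 / 2 + (alphaP p / 2) ^ 2 / (p + 1) - alphaP p * (1 - alphaP p) / 2
      ≤ alphaP p ^ 2 / 2 + (alphaP p / 2) ^ 2 * (alphaP p / 2)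
          - alphaP p * (1 - alphaP p) / 2 := by
        rw [div_eq_mul_inv ((alphaP p / 2) ^ 2)]
        gcongr
        exact inv_add_one_le_alphaP_div_two (by omega)
    _ = alphaP p * (alphaP p + alphaP p ^ 2 / 8 - 1 / 2) := by ring
    _ ≤ alphaP p * -(1 / 18) := by gcongr; nlinarith
    _ = -(alphaP p / 18) := by ring

lemma emdenY_log_innerRadius_le {ρ : ℝ} (hρ : ρ ∈ Ico (innerRadius p c) R) :
    emdenY p u (log (innerRadius p c)) ≤ 3 * emdenY p u (log ρ) := by
  have hα := alphaP_pos (p := p) (by omega)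
  have hρ0 : 0 < ρ := hcR.1.trans_le hρ.1
  have hmem : ∀ t ∈ Iio (log R), exp t ∈ Ioo 0 R := fun t ht =>
    ⟨exp_pos t, (lt_log_iff_exp_lt (hcR.1.trans hcR.2)).1 ht⟩
  have hneg : ∀ t ∈ Iio (log R), t < 0 := fun t ht => exp_lt_one_iff.1 (h.lt_one (hmem t ht))
  have hlog : log ρ ∈ Iio (log R) := log_lt_log hρ0 hρ.2
  have hY : 0 < emdenY p u (log ρ) := by
    rw [emdenY, exp_log hρ0]
    exact div_pos (by linarith [h.one_lt ρ ⟨hρ0, hρ.2⟩]) (uInfty_pos (by omega) hρ0)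
  have henergy := antitoneOn_emdenEnergy (alphaP_le_half (by omega)) (convex_Iio (log R)) hneg
    (fun t ht => h.emdenAt (by omega) (hmem t ht)) (log_lt_log hcR.1 hcR.2) hlog
    (log_le_log hcR.1 hρ.1)
  have hsq : alphaP p * emdenY p u (log (innerRadius p c)) ^ 2
      ≤ alphaP p * (3 * emdenY p u (log ρ)) ^ 2 := by
    nlinarith [h.emdenEnergy_log_innerRadius_le hp hcR, mul_pos (mul_pos hα hα) (pow_pos hY 2),
      neg_le_emdenEnergy (p := p) (V := emdenV p u)
        (alphaP_mul_one_sub_pos (p := p) (by omega)).le (hneg _ hlog).le hY.le]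
  exact le_of_sq_le_sq (le_of_mul_le_mul_left hsq hα) (by positivity)

end Outer

lemma le_emdenY (h : IsProfileAbove p c R u) (hp : 6 ≤ p) {ρ : ℝ} (hρ : ρ ∈ Ioo 0 R)
    (hle : innerRadius p c ≤ ρ) :
    1 / (6 * uInfty p (alphaP p / 2)) ≤ emdenY p u (log ρ) := by
  have hc : 1 < c := h.one_lt_height (by omega) (hρ.1.trans hρ.2)
  have hcR : innerRadius p c ∈ Ioo 0 R :=
    ⟨innerRadius_pos (by omega) (by linarith), hle.trans_lt hρ.2⟩
  have hthird : 1 / (6 * uInfty p (alphaP p / 2)) = 1 / (2 * uInfty p (alphaP p / 2)) / 3 := by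
    rw [div_div]
    ring
  linarith [h.le_emdenY_log_innerRadius (by omega) hcR,
    h.emdenY_log_innerRadius_le hp hcR ⟨hle, hρ.2⟩]

end IsProfileAbove

/-! ### Crossings -/

lemma IsProfileAbove.seven_sixths_le {p : ℕ} {c R : ℝ} {u : ℝ → ℝ} (h : IsProfileAbove p c R u)
    (hp : 6 ≤ p) (hc : 7 ≤ c) (hR : R ≤ innerRadius p 7) {ρ : ℝ} (hρ : ρ ∈ Ioo 0 R) :
    7 / 6 ≤ u ρ := by
  rcases le_total ρ (innerRadius p c) with hle | hge
  · linarith [h.half_le_apply (by omega) hρ hle]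
  have hU₁ : 0 < uInfty p (alphaP p / 2) :=
    uInfty_pos (by omega) (half_pos (alphaP_pos (by omega)))
  have hU : 7 * uInfty p (alphaP p / 2) ≤ uInfty p ρ := by
    rw [← uInfty_innerRadius (by omega) (by norm_num)]
    exact uInfty_le_uInfty (by omega) hρ.1 (hρ.2.le.trans hR)
  have hY := h.le_emdenY hp hρ hge
  rw [emdenY, exp_log hρ.1, div_le_div_iff₀ (by positivity) (by linarith), one_mul] at hY
  refine le_of_mul_le_mul_right (?_ : 7 / 6 * (6 * uInfty p (alphaP p / 2)) ≤ _) (by positivity)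
  linarith

lemma forall_lt_of_forall_lt_imp_lt {u : ℝ → ℝ} {a b m : ℝ} (hu : ContinuousOn u (Ico a b))
    (ha : m < u a) (hstep : ∀ s ∈ Ioo a b, (∀ x ∈ Ioo a s, m < u x) → m < u s) :
    ∀ x ∈ Ioo a b, m < u x := by
  by_contra! ⟨r, hr, hur⟩
  set S := Icc a r ∩ u ⁻¹' Iic m
  have hS_closed : IsClosed S :=
    (hu.mono (Icc_subset_Ico_right hr.2)).preimage_isClosed_of_isClosed isClosed_Icc isClosed_Iic
  have hS_bdd : BddBelow S := ⟨a, fun x hx => hx.1.1⟩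
  have hs : sInf S ∈ S := hS_closed.csInf_mem ⟨r, right_mem_Icc.2 hr.1.le, hur⟩ hS_bdd
  have has : a < sInf S := hs.1.1.lt_of_ne fun heq => ha.not_ge (heq ▸ hs.2)
  refine (hstep _ ⟨has, hs.1.2.trans_lt hr.2⟩ fun x hx => ?_).not_ge hs.2
  by_contra! hux
  exact hx.2.not_ge (csInf_le hS_bdd ⟨⟨hx.1.le, hx.2.le.trans hs.1.2⟩, hux⟩)

lemma isProfileAbove_innerRadius {p : ℕ} (hp : 6 ≤ p) {u : ℝ → ℝ} (hc : 7 ≤ u 0)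
    (hu : ContinuousOn u (Ico 0 (innerRadius p 7)))
    (heq : ∀ ρ ∈ Ioo 0 (innerRadius p 7), ProfileEq p u ρ) :
    IsProfileAbove p (u 0) (innerRadius p 7) u := by
  have hR : innerRadius p 7 ≤ 1 / 2 := by
    linarith [innerRadius_le (p := p) (c := 7) (by omega) (by norm_num),
      alphaP_le_half (p := p) (by omega)]
  refine ⟨hR, hu, rfl, forall_lt_of_forall_lt_imp_lt hu (by linarith) fun s hs hlt => ?_, heq⟩
  have hprofile : IsProfileAbove p (u 0) s u :=
    ⟨hs.2.le.trans hR, hu.mono (Ico_subset_Ico_right hs.2.le), rfl, hlt,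
      fun ρ hρ => heq ρ ⟨hρ.1, hρ.2.trans hs.2⟩⟩
  have hclosure : s ∈ closure (Ioo 0 s) := by
    rw [closure_Ioo hs.1.ne]
    exact right_mem_Icc.2 hs.1.le
  have hlim : u s ∈ closure (Ici (7 / 6)) :=
    ((hu s ⟨hs.1.le, hs.2⟩).mono fun x hx => ⟨hx.1.le, hx.2.trans hs.2⟩).mem_closure hclosure
      fun x hx => hprofile.seven_sixths_le hp hc hs.2.le hx
  rw [isClosed_Ici.closure_eq, mem_Ici] at hlim
  linarith

lemma IsProfileAbove.exists_crossing_window {p : ℕ} (hp : 6 ≤ p) :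
    ∃ τ > 0, ∀ (c R a : ℝ) (u : ℝ → ℝ), IsProfileAbove p c R u → R ≤ alphaP p / 2 →
      innerRadius p c ≤ exp a → exp (a + τ) < R →
      ∃ t ∈ Icc a (a + τ), u (exp t) = uInfty p (exp t) := by
  have hα := alphaP_pos (p := p) (by omega)
  have hα' := alphaP_le_two_fifths hp
  have hU : 0 < uInfty p (alphaP p / 2) := uInfty_pos (by omega) (half_pos hα)
  obtain ⟨τ, hτ, hwindow⟩ := EmdenAt.exists_window (p := p) (by omega) hα
    (alphaP_mul_one_sub_pos (p := p) (by omega)) (by nlinarith)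
    (by nlinarith [alphaP_mul_sub_one (p := p) (by omega)])
    (by positivity : 0 < 1 / (6 * uInfty p (alphaP p / 2)))
  refine ⟨τ, hτ, fun c R a u h hR hca haR => ?_⟩
  have hmem : ∀ t ∈ Icc a (a + τ), exp t ∈ Ioo 0 R := fun t ht =>
    ⟨exp_pos t, (exp_le_exp.2 ht.2).trans_lt haR⟩
  have hexp : ∀ t ∈ Icc a (a + τ), exp (2 * t) ≤ 1 - 2 * alphaP p := fun t ht => by
    rw [show exp (2 * t) = exp t ^ 2 from exp_nat_mul t 2]
    nlinarith [(hmem t ht).1, (hmem t ht).2]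
  obtain ⟨t, ht, hYt⟩ := hwindow a (emdenY p u) (emdenV p u) hexp
    (fun t ht => h.emdenAt (by omega) (hmem t ht)) fun t ht => by
      simpa only [log_exp] using h.le_emdenY hp (hmem t ht) (hca.trans (exp_le_exp.2 ht.1))
  exact ⟨t, ht, (div_eq_one_iff_eq (uInfty_pos (by omega) (exp_pos t)).ne').1 hYt⟩

lemma log_innerRadius_add_lt {p : ℕ} (hp : 5 ≤ p) {c c' s : ℝ} (hc' : 0 < c') (hs : 0 ≤ s)
    (h : c' * exp s < c) : log (innerRadius p c) + s < log (innerRadius p c') := by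
  have hα : 1 ≤ (alphaP p)⁻¹ :=
    (one_le_inv₀ (alphaP_pos (by omega))).2 (by linarith [alphaP_le_half hp])
  have hlog : log c' + s < log c := by
    simpa only [log_mul hc'.ne' (exp_ne_zero s), log_exp] using log_lt_log (by positivity) h
  rw [log_innerRadius (by omega) (h.trans' (by positivity)), log_innerRadius (by omega) hc']
  nlinarith

lemma le_encard_of_forall_inter_Icc_nonempty {S : Set ℝ} {a τ : ℝ} (hτ : 0 < τ) (N : ℕ)
    (h : ∀ i < N, (S ∩ Icc (a + 2 * i * τ) (a + 2 * i * τ + τ)).Nonempty) :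
    (N : ℕ∞) ≤ S.encard := by
  choose! T hTS hT using h
  have hinj : InjOn T (Iio N) := by
    refine StrictMonoOn.injOn fun i hi j hj hij => ?_
    have hij' : (i : ℝ) + 1 ≤ j := by exact_mod_cast hij
    nlinarith [(hT i hi).2, (hT j hj).1]
  calc (N : ℕ∞) = (Iio N).encard := by
        rw [← Finset.coe_Iio, encard_coe_eq_coe_finsetCard, Nat.card_Iio]
    _ = (T '' Iio N).encard := hinj.encard_image.symm
    _ ≤ S.encard := encard_le_encard (image_subset_iff.2 hTS)

theorem many_crossings_for_large_c_general (p : ℕ) (hp : 6 ≤ p) :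
    ∃ ρ₂ ∈ Ioo (0 : ℝ) 1, ∀ N : ℕ, ∃ C : ℝ, 0 < C ∧ ∀ c : ℝ, C < c → ∀ u : ℝ → ℝ,
      ContinuousOn u (Ico 0 ρ₂) → u 0 = c → (∀ ρ ∈ Ioo (0 : ℝ) ρ₂, ProfileEq p u ρ) →
      (N : ℕ∞) ≤ {ρ ∈ Ioo (0 : ℝ) ρ₂ | u ρ = uInfty p ρ}.encard := by
  have hρ₂ : innerRadius p 7 ≤ alphaP p / 2 := innerRadius_le (by omega) (by norm_num)
  have hρ₂0 : 0 < innerRadius p 7 := innerRadius_pos (by omega) (by norm_num)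
  refine ⟨innerRadius p 7, ⟨hρ₂0, by linarith [alphaP_le_two_fifths hp]⟩, fun N => ?_⟩
  obtain ⟨τ, hτ, hcross⟩ := IsProfileAbove.exists_crossing_window hp
  refine ⟨7 * exp (2 * N * τ), by positivity, ?_⟩
  rintro _ hc u hu rfl heq
  have hc7 : 7 < u 0 := by linarith [one_le_exp (by positivity : 0 ≤ 2 * N * τ)]
  have hprofile := isProfileAbove_innerRadius hp hc7.le hu heq
  have hroom := log_innerRadius_add_lt (p := p) (by omega) (by norm_num) (by positivity) hc
  set S := {ρ ∈ Ioo (0 : ℝ) (innerRadius p 7) | u ρ = uInfty p ρ}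
  suffices (N : ℕ∞) ≤ (exp ⁻¹' S).encard from
    (this.trans_eq (exp_injective.encard_image _).symm).trans
      (encard_le_encard (image_preimage_subset exp S))
  refine le_encard_of_forall_inter_Icc_nonempty (a := log (innerRadius p (u 0))) hτ N
    fun i hi => ?_
  have hi' : (i : ℝ) + 1 ≤ N := by exact_mod_cast hi
  have hend : exp (log (innerRadius p (u 0)) + 2 * i * τ + τ) < innerRadius p 7 :=
    (lt_log_iff_exp_lt hρ₂0).1 (by nlinarith)
  obtain ⟨t, ht, hut⟩ := hcross _ _ _ u hprofile hρ₂ (le_trans (le_exp_log _) (exp_le_exp.2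
    (le_add_of_nonneg_right (by positivity)))) hend
  exact ⟨t, ⟨⟨exp_pos t, (exp_le_exp.2 ht.2).trans_lt hend⟩, hut⟩, ht⟩

/-- **Lemma 2, zero-counting form.** There is `ρ₂ ∈ (0,1)` such that for
every `N` there is `C > 0` such that every solution regular at `ρ = 0` with
`u(0) = c > C`, `u'(0) = 0` crosses the singular solution `u∞` at least `N` times
in `(0, ρ₂)`. -/
theorem many_crossings_for_large_c (p : ℕ) (hp_odd : Odd p) (hp : 7 ≤ p) :
    ∃ ρ₂ ∈ Ioo (0 : ℝ) 1, ∀ N : ℕ, ∃ C : ℝ, 0 < C ∧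
      ∀ c : ℝ, C < c → ∀ u : ℝ → ℝ,
        ContinuousOn u (Icc 0 1) →
        AnalyticAt ℝ u 0 → u 0 = c → deriv u 0 = 0 →
        (∀ ρ ∈ Ioo (0 : ℝ) 1, ProfileEq p u ρ) →
        (N : ℕ∞) ≤ {ρ ∈ Ioo (0 : ℝ) ρ₂ | u ρ = uInfty p ρ}.encard := by
  obtain ⟨ρ₂, hρ₂, h⟩ := many_crossings_for_large_c_general p (by omega)
  refine ⟨ρ₂, hρ₂, fun N => (h N).imp fun C hC => ⟨hC.1, fun c hc u hu _ h0 _ heq => ?_⟩⟩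
  exact hC.2 c hc u (hu.mono fun x hx => ⟨hx.1, (hx.2.trans hρ₂.2).le⟩) h0
    fun ρ hρ => heq ρ ⟨hρ.1, hρ.2.trans hρ₂.2⟩
end

section
/- For every integer p ≥ 7 and every real number v with v ≥ (p−5)/(p−1), one has (p−5)² < 8(p−3) · ∑_{k=1}^{p−1} v^k; equivalently, the discriminant ((p−5)/(p−1))² − (8(p−3)/(p−1)²)·(v + v² + ⋯ + v^{p−1}) is strictly negative. -/
open Set Real Filter

/-! The sum of powers is increasing in `v ≥ 0`, so `v = (p-5)/(p-1) = 1 - 4/n` with `n = p - 1` is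
the worst case. There the geometric sum equals `(n-4)/4 * (1 - (1-4/n)^n)`, and
`(1-4/n)^n ≤ exp (-4) < 1/2` reduces the claim to `(p-5)² < (p-3)(p-5)`. -/

theorem sum_Icc_one_pow_mul_one_sub {R : Type*} [Ring R] (x : R) (n : ℕ) :
    (∑ k ∈ Finset.Icc 1 n, x ^ k) * (1 - x) = x - x ^ (n + 1) := by
  rw [← Finset.Ico_add_one_right_eq_Icc, geom_sum_Ico_mul_neg x (by omega), pow_one]

theorem sum_Icc_one_pow_one_sub_div {K : Type*} [Field K] {n : ℕ} (hn : (n : K) ≠ 0) {t : K}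
    (ht : t ≠ 0) :
    ∑ k ∈ Finset.Icc 1 n, (1 - t / n) ^ k = (n - t) / t * (1 - (1 - t / n) ^ n) := by
  have hsum := sum_Icc_one_pow_mul_one_sub (1 - t / n) n
  rw [sub_sub_cancel, ← eq_div_iff (div_ne_zero ht hn)] at hsum
  rw [hsum, pow_succ]
  field_simp

theorem mul_one_sub_exp_neg_le_sum_Icc_one_pow {n : ℕ} {t v : ℝ} (ht : 0 < t) (htn : t ≤ n)
    (hv : 1 - t / n ≤ v) :
    (n - t) / t * (1 - exp (-t)) ≤ ∑ k ∈ Finset.Icc 1 n, v ^ k := by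
  have hn : (0 : ℝ) < n := ht.trans_le htn
  have hbase : 0 ≤ 1 - t / n := sub_nonneg.mpr (div_le_one_of_le₀ htn hn.le)
  calc (n - t) / t * (1 - exp (-t))
      ≤ (n - t) / t * (1 - (1 - t / n) ^ n) := by
        gcongr
        exact one_sub_div_pow_le_exp_neg htn
    _ = ∑ k ∈ Finset.Icc 1 n, (1 - t / n) ^ k :=
        (sum_Icc_one_pow_one_sub_div hn.ne' ht.ne').symm
    _ ≤ ∑ k ∈ Finset.Icc 1 n, v ^ k := by gcongr

theorem discriminant_negative_general (p : ℕ) (hp : 6 ≤ p) (v : ℝ)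
    (hv : ((p : ℝ) - 5) / ((p : ℝ) - 1) ≤ v) :
    ((p : ℝ) - 5) ^ 2 < 8 * ((p : ℝ) - 3) * ∑ k ∈ Finset.Icc 1 (p - 1), v ^ k := by
  have hp' : (6 : ℝ) ≤ p := by exact_mod_cast hp
  have hcast : ((p - 1 : ℕ) : ℝ) = p - 1 := Nat.cast_pred (by omega)
  have hendpoint : 1 - 4 / ((p : ℝ) - 1) = (p - 5) / (p - 1) := by
    rw [one_sub_div (by linarith)]
    ring
  have hsum : ((p : ℝ) - 1 - 4) / 4 * (1 - exp (-4)) ≤ ∑ k ∈ Finset.Icc 1 (p - 1), v ^ k := by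
    rw [← hcast]
    apply mul_one_sub_exp_neg_le_sum_Icc_one_pow four_pos <;> rw [hcast]
    · linarith
    · rwa [hendpoint]
  have hexp : exp (-4) ≤ 1 / 2 :=
    (exp_le_exp.mpr (by norm_num)).trans exp_neg_one_lt_half.le
  calc ((p : ℝ) - 5) ^ 2
      < (p - 3) * (p - 5) := by nlinarith
    _ = 8 * (p - 3) * ((p - 1 - 4) / 4 * (1 - 1 / 2)) := by ring
    _ ≤ 8 * (p - 3) * ((p - 1 - 4) / 4 * (1 - exp (-4))) := by
        gcongr <;> linarith
    _ ≤ 8 * (p - 3) * ∑ k ∈ Finset.Icc 1 (p - 1), v ^ k := by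
        gcongr
        linarith

/-- The discriminant estimate: for `p ≥ 7` and `v ≥ (p-5)/(p-1)`,
`(p-5)² < 8(p-3) (v + v² + ⋯ + v^(p-1))`. -/
theorem discriminant_negative (p : ℕ) (hp : 7 ≤ p) (v : ℝ)
    (hv : ((p : ℝ) - 5) / ((p : ℝ) - 1) ≤ v) :
    ((p : ℝ) - 5) ^ 2 < 8 * ((p : ℝ) - 3) * ∑ k ∈ Finset.Icc 1 (p - 1), v ^ k :=
  discriminant_negative_general p (by omega) v hv
end

section
/- Let p ≥ 7 be an odd integer. For every real number c there exist ε > 0 and a function u, real-analytic on (−ε, ε), such that u satisfies the self-similar profile equation (1−ρ²)u''(ρ) + (2/ρ − (2+2α)ρ)u'(ρ) − α(α+1)u(ρ) + u(ρ)^p = 0 for all ρ ∈ (0, ε), with u(0) = c, u'(0) = 0, and u''(0) = (2/3)·((p+1)c/(p−1)² − c^p/2). Moreover this solution is unique: any two functions real-analytic near 0 with value c and vanishing derivative at 0 that satisfy the equation on a punctured right neighborhood of 0 coincide near 0. -/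
open Set Real Filter

/-!
Multiplied by `ρ`, the profile equation becomes regular at `0`. Taking Taylor series at `0` is
compatible with ring operations and derivatives and is injective on analytic germs, so an analytic
`u` solves the equation to the right of `0` iff its Taylor series `f = ∑ fₙ Xⁿ` solves it formally,
that is, iff `f₁ = 0` and `(n + 2) (n + 3) fₙ₊₂ = (n + α) (n + 1 + α) fₙ - (f ^ p)ₙ` for all `n`.
This recurrence has exactly one solution for each `f₀ = c`. Its series converges: the recurrence
gives `|fₙ₊₂| ≤ K (|fₙ| + |(f ^ p)ₙ|)`, and since the partial sums of `∑ |fₙ| rⁿ` are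
submultiplicative in `f`, for small `r` they stay below a fixed bound by induction.
-/

section TaylorSeries

open PowerSeries
open scoped ContDiff Nat Topology

variable {𝕜 : Type*} [NontriviallyNormedField 𝕜] {u v : 𝕜 → 𝕜} {x : 𝕜}

/-- The Taylor series of `u` at `x`, as a formal power series in the increment. In characteristic
zero, on germs of smooth functions it is a ring homomorphism intertwining `deriv` with the formal
derivative `d⁄dX`. -/
noncomputable def taylorSeries (u : 𝕜 → 𝕜) (x : 𝕜) : 𝕜⟦X⟧ :=
  mk fun n => iteratedDeriv n u x / n !

theorem coeff_taylorSeries (u : 𝕜 → 𝕜) (x : 𝕜) (n : ℕ) :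
    coeff n (taylorSeries u x) = iteratedDeriv n u x / n ! :=
  coeff_mk _ _

theorem constantCoeff_taylorSeries (u : 𝕜 → 𝕜) (x : 𝕜) :
    constantCoeff (taylorSeries u x) = u x := by
  rw [← coeff_zero_eq_constantCoeff_apply, coeff_taylorSeries, iteratedDeriv_zero,
    Nat.factorial_zero, Nat.cast_one, div_one]

theorem taylorSeries_const (a x : 𝕜) : taylorSeries (fun _ => a) x = C a := by
  ext n
  rcases n with _ | n <;> simp [coeff_taylorSeries, iteratedDeriv_const, coeff_C]

theorem taylorSeries_id (x : 𝕜) : taylorSeries (fun y => y) x = C x + X := by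
  ext n
  rcases n with _ | _ | n <;> simp [coeff_taylorSeries, iteratedDeriv_fun_id, coeff_X]

theorem taylorSeries_add (hu : ContDiffAt 𝕜 ∞ u x) (hv : ContDiffAt 𝕜 ∞ v x) :
    taylorSeries (fun y => u y + v y) x = taylorSeries u x + taylorSeries v x := by
  ext n
  have hn : (n : WithTop ℕ∞) ≤ ∞ := mod_cast le_top
  simp only [map_add, coeff_taylorSeries, iteratedDeriv_fun_add (hu.of_le hn) (hv.of_le hn),
    add_div]

theorem taylorSeries_sub (hu : ContDiffAt 𝕜 ∞ u x) (hv : ContDiffAt 𝕜 ∞ v x) :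
    taylorSeries (fun y => u y - v y) x = taylorSeries u x - taylorSeries v x := by
  ext n
  have hn : (n : WithTop ℕ∞) ≤ ∞ := mod_cast le_top
  simp only [map_sub, coeff_taylorSeries, iteratedDeriv_fun_sub (hu.of_le hn) (hv.of_le hn),
    sub_div]

section CharZero

variable [CharZero 𝕜]

theorem taylorSeries_mul (hu : ContDiffAt 𝕜 ∞ u x) (hv : ContDiffAt 𝕜 ∞ v x) :
    taylorSeries (fun y => u y * v y) x = taylorSeries u x * taylorSeries v x := by
  ext n
  have hn : (n : WithTop ℕ∞) ≤ ∞ := mod_cast le_top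
  rw [coeff_mul, coeff_taylorSeries, iteratedDeriv_fun_mul (hu.of_le hn) (hv.of_le hn),
    Finset.sum_div, Finset.Nat.sum_antidiagonal_eq_sum_range_succ
      fun i j => coeff i (taylorSeries u x) * coeff j (taylorSeries v x)]
  refine Finset.sum_congr rfl fun i hi => ?_
  rw [coeff_taylorSeries, coeff_taylorSeries,
    Nat.cast_choose 𝕜 (Nat.lt_succ_iff.1 (Finset.mem_range.1 hi))]
  have hfact (m : ℕ) : (m ! : 𝕜) ≠ 0 := mod_cast m.factorial_ne_zero
  field [hfact n, hfact i, hfact (n - i)]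

theorem taylorSeries_pow (hu : ContDiffAt 𝕜 ∞ u x) (n : ℕ) :
    taylorSeries (fun y => u y ^ n) x = taylorSeries u x ^ n := by
  induction n with
  | zero => simp only [pow_zero, taylorSeries_const, map_one]
  | succ n ih => simp only [pow_succ, taylorSeries_mul (hu.pow n) hu, ih]

theorem taylorSeries_deriv (u : 𝕜 → 𝕜) (x : 𝕜) :
    taylorSeries (deriv u) x = d⁄dX 𝕜 (taylorSeries u x) := by
  ext n
  have hfact : (n ! : 𝕜) ≠ 0 := mod_cast n.factorial_ne_zero
  have hsucc : (n + 1 : 𝕜) ≠ 0 := mod_cast n.succ_ne_zero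
  rw [coeff_derivative, coeff_taylorSeries, coeff_taylorSeries, iteratedDeriv_succ',
    Nat.factorial_succ, Nat.cast_mul, Nat.cast_succ]
  field

variable [CompleteSpace 𝕜]

theorem taylorSeries_eq_zero_iff (hu : AnalyticAt 𝕜 u x) :
    taylorSeries u x = 0 ↔ ∀ᶠ y in 𝓝 x, u y = 0 := by
  rw [hu.hasFPowerSeriesAt.locally_zero_iff, FormalMultilinearSeries.ofScalars_series_eq_zero,
    PowerSeries.ext_iff, funext_iff]
  simp only [coeff_taylorSeries, map_zero, Pi.zero_apply]

theorem taylorSeries_eq_iff (hu : AnalyticAt 𝕜 u x) (hv : AnalyticAt 𝕜 v x) :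
    taylorSeries u x = taylorSeries v x ↔ u =ᶠ[𝓝 x] v := by
  rw [← sub_eq_zero, ← taylorSeries_sub hu.contDiffAt hv.contDiffAt,
    taylorSeries_eq_zero_iff (hu.fun_sub hv)]
  simp only [sub_eq_zero, EventuallyEq]

theorem exists_analyticAt_taylorSeries_eq {f : 𝕜⟦X⟧} {r B : ℝ} (hr : 0 < r)
    (hf : ∀ n, ‖coeff n f‖ * r ^ n ≤ B) (x : 𝕜) :
    ∃ u : 𝕜 → 𝕜, AnalyticAt 𝕜 u x ∧ taylorSeries u x = f := by
  let P := FormalMultilinearSeries.ofScalars 𝕜 fun n => coeff n f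
  have hradius : 0 < P.radius :=
    (ENNReal.ofReal_pos.2 hr).trans_le <| P.le_radius_of_bound B fun n => by
      simpa only [P, FormalMultilinearSeries.ofScalars_norm, Real.coe_toNNReal r hr.le] using hf n
  have hP : HasFPowerSeriesAt (fun y => P.sum (y - x)) P x := by
    simpa only [zero_add] using ((P.hasFPowerSeriesOnBall hradius).comp_sub x).hasFPowerSeriesAt
  refine ⟨_, hP.analyticAt, PowerSeries.ext fun n => ?_⟩
  have hcoeff := FormalMultilinearSeries.ofScalars_series_injective 𝕜 𝕜
    (hP.analyticAt.hasFPowerSeriesAt.eq_formalMultilinearSeries hP)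
  rw [coeff_taylorSeries]
  exact congrFun hcoeff n

end CharZero

end TaylorSeries

section FormalEquation

open PowerSeries
open scoped ContDiff Topology

/-- The left-hand side of the profile equation multiplied by `ρ`, which clears its pole at `ρ = 0`,
with an exponent `α` independent of `p`. -/
noncomputable def profileResidual (α : ℝ) (p : ℕ) (u : ℝ → ℝ) (ρ : ℝ) : ℝ :=
  ρ * (1 - ρ ^ 2) * deriv (deriv u) ρ + (2 - (2 + 2 * α) * ρ ^ 2) * deriv u ρ
    - α * (α + 1) * (ρ * u ρ) + ρ * u ρ ^ p

/-- The counterpart of `profileResidual` for formal power series. -/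
noncomputable def formalResidual {R : Type*} [CommRing R] (α : R) (p : ℕ) (f : R⟦X⟧) : R⟦X⟧ :=
  X * (1 - X ^ 2) * d⁄dX R (d⁄dX R f) + (C 2 - C (2 + 2 * α) * X ^ 2) * d⁄dX R f
    - C (α * (α + 1)) * (X * f) + X * f ^ p

theorem profileEq_iff_profileResidual_eq_zero {p : ℕ} {u : ℝ → ℝ} {ρ : ℝ} (hρ : ρ ≠ 0) :
    ProfileEq p u ρ ↔ profileResidual (alphaP p) p u ρ = 0 := by
  have hmul : profileResidual (alphaP p) p u ρ =
      ρ * ((1 - ρ ^ 2) * deriv (deriv u) ρ + (2 / ρ - (2 + 2 * alphaP p) * ρ) * deriv u ρ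
        - alphaP p * (alphaP p + 1) * u ρ + u ρ ^ p) := by
    rw [profileResidual]
    field
  rw [hmul, mul_eq_zero_iff_left hρ, ProfileEq]

theorem taylorSeries_profileResidual {u : ℝ → ℝ} (hu : AnalyticAt ℝ u 0) (α : ℝ) (p : ℕ) :
    taylorSeries (profileResidual α p u) 0 = formalResidual α p (taylorSeries u 0) := by
  have hu₀ : ContDiffAt ℝ ∞ u 0 := hu.contDiffAt
  have hu₁ : ContDiffAt ℝ ∞ (deriv u) 0 := hu.deriv.contDiffAt
  have hu₂ : ContDiffAt ℝ ∞ (deriv (deriv u)) 0 := hu.deriv.deriv.contDiffAt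
  unfold profileResidual formalResidual
  simp (disch := fun_prop) only [taylorSeries_add, taylorSeries_sub, taylorSeries_mul,
    taylorSeries_pow, taylorSeries_const, taylorSeries_id, taylorSeries_deriv, map_zero, zero_add,
    map_one, map_add, map_mul]

theorem eventually_profileEq_iff_formalResidual_eq_zero {p : ℕ} {u : ℝ → ℝ}
    (hu : AnalyticAt ℝ u 0) :
    (∀ᶠ ρ in 𝓝[>] 0, ProfileEq p u ρ) ↔ formalResidual (alphaP p) p (taylorSeries u 0) = 0 := by
  have hresidual : AnalyticAt ℝ (profileResidual (alphaP p) p u) 0 := by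
    unfold profileResidual
    fun_prop
  have hiff : (∀ᶠ ρ in 𝓝[>] 0, ProfileEq p u ρ) ↔
      ∀ᶠ ρ in 𝓝[>] 0, profileResidual (alphaP p) p u ρ = 0 :=
    eventually_congr <| eventually_mem_nhdsWithin.mono fun ρ hρ =>
      profileEq_iff_profileResidual_eq_zero (ne_of_gt hρ)
  rw [← taylorSeries_profileResidual hu, taylorSeries_eq_zero_iff hresidual, hiff]
  refine ⟨fun h => ?_, fun h => h.filter_mono nhdsWithin_le_nhds⟩
  exact hresidual.frequently_zero_iff_eventually_zero.1
    (h.frequently.filter_mono (nhdsGT_le_nhdsNE 0))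

section Coefficients

variable {R : Type*} [CommRing R]

theorem coeff_X_mul_derivative (f : R⟦X⟧) (n : ℕ) : coeff n (X * d⁄dX R f) = n * coeff n f := by
  rcases n with _ | n
  · simp
  · rw [coeff_succ_X_mul, coeff_derivative, Nat.cast_succ, mul_comm]

theorem coeff_X_sq_mul_derivative_derivative (f : R⟦X⟧) (n : ℕ) :
    coeff n (X ^ 2 * d⁄dX R (d⁄dX R f)) = n * (n - 1) * coeff n f := by
  rcases n with _ | n
  · simp
  · rw [sq, mul_assoc, coeff_succ_X_mul, coeff_X_mul_derivative, coeff_derivative]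
    push_cast
    ring

theorem coeff_zero_formalResidual (α : R) (p : ℕ) (f : R⟦X⟧) :
    coeff 0 (formalResidual α p f) = 2 * coeff 1 f := by
  have hderiv : constantCoeff (d⁄dX R f) = coeff 1 f := by
    rw [← coeff_zero_eq_constantCoeff_apply, coeff_derivative]
    simp
  simp [formalResidual, hderiv]

-- With `θ = X d⁄dX`, the residual is `X f'' + 2 f' - X ((θ + α) (θ + α + 1) f - f ^ p)`.
theorem coeff_succ_formalResidual (α : R) (p : ℕ) (f : R⟦X⟧) (n : ℕ) :
    coeff (n + 1) (formalResidual α p f) = (n + 2) * (n + 3) * coeff (n + 2) f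
      - ((n + α) * (n + 1 + α) * coeff n f - coeff n (f ^ p)) := by
  have hsplit : formalResidual α p f = X * d⁄dX R (d⁄dX R f) + (2 : R) • d⁄dX R f
      - X * (X ^ 2 * d⁄dX R (d⁄dX R f) + (2 + 2 * α) • (X * d⁄dX R f)
        + (α * (α + 1)) • f - f ^ p) := by
    simp only [formalResidual, smul_eq_C_mul]
    ring
  simp only [hsplit, map_add, map_sub, coeff_succ_X_mul, coeff_smul, smul_eq_mul,
    coeff_derivative, coeff_X_mul_derivative, coeff_X_sq_mul_derivative_derivative]
  push_cast
  ring

theorem coeff_pow_eq_of_trunc_eq {f g : R⟦X⟧} {n : ℕ}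
    (h : trunc (n + 1) f = trunc (n + 1) g) (p : ℕ) : coeff n (f ^ p) = coeff n (g ^ p) := by
  have hpow : trunc (n + 1) (f ^ p) = trunc (n + 1) (g ^ p) := by
    rw [← trunc_trunc_pow f, h, trunc_trunc_pow]
  simpa only [coeff_trunc, n.lt_succ_self, if_true] using congrArg (Polynomial.coeff · n) hpow

end Coefficients

section Recurrence

variable {K : Type*} [Field K] [CharZero K] {α : K} {p : ℕ} {f g : K⟦X⟧}

theorem formalResidual_eq_zero_iff :
    formalResidual α p f = 0 ↔ coeff 1 f = 0 ∧ ∀ n : ℕ, coeff (n + 2) f =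
      ((n + α) * (n + 1 + α) * coeff n f - coeff n (f ^ p)) / ((n + 2) * (n + 3)) := by
  have hne (n : ℕ) : (n + 2 : K) * (n + 3) ≠ 0 := 
    mod_cast (by positivity : (n + 2) * (n + 3) ≠ 0)
  rw [PowerSeries.ext_iff, ← Nat.and_forall_add_one]
  simp only [map_zero, coeff_zero_formalResidual, coeff_succ_formalResidual, mul_eq_zero,
    two_ne_zero, false_or, sub_eq_zero, eq_div_iff (hne _), mul_comm (coeff _ f) (_ * _)]

theorem eq_of_formalResidual_eq_zero (hf : formalResidual α p f = 0)
    (hg : formalResidual α p g = 0) (h₀ : coeff 0 f = coeff 0 g) : f = g := by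
  obtain ⟨hf₁, hf⟩ := formalResidual_eq_zero_iff.1 hf
  obtain ⟨hg₁, hg⟩ := formalResidual_eq_zero_iff.1 hg
  ext n
  induction n using Nat.strong_induction_on with
  | h n ih =>
    match n with
    | 0 => exact h₀
    | 1 => rw [hf₁, hg₁]
    | n + 2 =>
      have htrunc : trunc (n + 1) f = trunc (n + 1) g := by
        ext k
        simp only [coeff_trunc]
        split_ifs with hk
        · exact ih k (by lia)
        · rfl
      rw [hf, hg, ih n (by lia), coeff_pow_eq_of_trunc_eq htrunc]

/-- The coefficients of the formal solution with constant term `c`, by the recurrence of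
`formalResidual_eq_zero_iff`. Coefficient `n` of the `p`-th power only involves the coefficients up
to `n`, so cutting the series off there makes the recursion well-founded without changing its
value. -/
noncomputable def profileCoeff (α : K) (p : ℕ) (c : K) : ℕ → K
  | 0 => c
  | 1 => 0
  | n + 2 => ((n + α) * (n + 1 + α) * profileCoeff α p c n
      - coeff n ((mk fun k => if _ : k ≤ n then profileCoeff α p c k else 0) ^ p))
        / ((n + 2) * (n + 3))

theorem formalResidual_mk_profileCoeff (α : K) (p : ℕ) (c : K) :
    formalResidual α p (mk (profileCoeff α p c)) = 0 := by
  refine formalResidual_eq_zero_iff.2 ⟨by rw [coeff_mk, profileCoeff], fun n => ?_⟩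
  have htrunc : trunc (n + 1) (mk fun k => if _ : k ≤ n then profileCoeff α p c k else 0) =
      trunc (n + 1) (mk (profileCoeff α p c)) := by
    ext k
    simp only [coeff_trunc, coeff_mk, Nat.lt_succ_iff]
    grind
  rw [coeff_mk, coeff_mk, profileCoeff, coeff_pow_eq_of_trunc_eq htrunc]

end Recurrence

end FormalEquation

section Majorant

open PowerSeries

variable {𝕜 : Type*} [NormedField 𝕜]

/-- The weighted `ℓ¹` norm `∑ ‖fₙ‖ rⁿ` of the truncation of `f` below degree `N`. -/
noncomputable def truncNorm (r : ℝ) (N : ℕ) (f : 𝕜⟦X⟧) : ℝ :=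
  ∑ n ∈ Finset.range N, ‖coeff n f‖ * r ^ n

variable {r : ℝ}

theorem truncNorm_nonneg (hr : 0 ≤ r) (N : ℕ) (f : 𝕜⟦X⟧) : 0 ≤ truncNorm r N f :=
  Finset.sum_nonneg fun _ _ => by positivity

theorem norm_coeff_mul_pow_le_truncNorm (hr : 0 ≤ r) (n : ℕ) (f : 𝕜⟦X⟧) :
    ‖coeff n f‖ * r ^ n ≤ truncNorm r (n + 1) f :=
  Finset.single_le_sum (f := fun n => ‖coeff n f‖ * r ^ n) (fun _ _ => by positivity)
    (Finset.self_mem_range_succ n)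

theorem norm_coeff_mul_mul_pow_le (hr : 0 ≤ r) (f g : 𝕜⟦X⟧) (n : ℕ) :
    ‖coeff n (f * g)‖ * r ^ n ≤ ∑ ij ∈ Finset.HasAntidiagonal.antidiagonal n,
      ‖coeff ij.1 f‖ * r ^ ij.1 * (‖coeff ij.2 g‖ * r ^ ij.2) := by
  calc ‖coeff n (f * g)‖ * r ^ n
      ≤ (∑ ij ∈ Finset.HasAntidiagonal.antidiagonal n, ‖coeff ij.1 f * coeff ij.2 g‖) * r ^ n := by
        rw [coeff_mul]
        gcongr
        exact norm_sum_le _ _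
    _ = _ := by
        rw [Finset.sum_mul]
        refine Finset.sum_congr rfl fun ij hij => ?_
        rw [← Finset.HasAntidiagonal.mem_antidiagonal.1 hij, norm_mul, pow_add]
        ring

theorem truncNorm_mul_le (hr : 0 ≤ r) (N : ℕ) (f g : 𝕜⟦X⟧) :
    truncNorm r N (f * g) ≤ truncNorm r N f * truncNorm r N g := by
  let S := Finset.range N ×ˢ Finset.range N
  let w : ℕ × ℕ → ℝ := fun ij => ‖coeff ij.1 f‖ * r ^ ij.1 * (‖coeff ij.2 g‖ * r ^ ij.2)
  have hfiber (n : ℕ) (hn : n ∈ Finset.range N) :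
      Finset.HasAntidiagonal.antidiagonal n = S.filter fun ij => ij.1 + ij.2 = n := by
    ext ij
    simp only [S, Finset.HasAntidiagonal.mem_antidiagonal, Finset.mem_filter, Finset.mem_product,
      Finset.mem_range] at hn ⊢
    lia
  calc truncNorm r N (f * g)
      ≤ ∑ n ∈ Finset.range N, ∑ ij ∈ Finset.HasAntidiagonal.antidiagonal n, w ij :=
        Finset.sum_le_sum fun n _ => norm_coeff_mul_mul_pow_le hr f g n
    _ = ∑ n ∈ Finset.range N, ∑ ij ∈ S with ij.1 + ij.2 = n, w ij :=
        Finset.sum_congr rfl fun n hn => by rw [hfiber n hn]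
    _ ≤ ∑ ij ∈ S, w ij :=
        Finset.sum_fiberwise_le_sum_of_sum_fiber_nonneg fun _ _ =>
          Finset.sum_nonneg fun _ _ => by positivity
    _ = truncNorm r N f * truncNorm r N g := by
        simp only [S, w, truncNorm, Finset.sum_mul_sum, Finset.sum_product]

theorem truncNorm_one_le (r : ℝ) (N : ℕ) : truncNorm r N (1 : 𝕜⟦X⟧) ≤ 1 := by
  rcases N with _ | N
  · simp [truncNorm]
  · simp [truncNorm, Finset.sum_range_succ', coeff_one]

theorem truncNorm_pow_le (hr : 0 ≤ r) (N p : ℕ) (f : 𝕜⟦X⟧) :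
    truncNorm r N (f ^ p) ≤ truncNorm r N f ^ p := by
  induction p with
  | zero => simpa only [pow_zero] using truncNorm_one_le r N
  | succ p ih =>
    rw [pow_succ, pow_succ]
    refine (truncNorm_mul_le hr N _ f).trans ?_
    gcongr
    exact truncNorm_nonneg hr N f

variable {f : 𝕜⟦X⟧} {p : ℕ} {K : ℝ}

theorem truncNorm_add_two_le (hr : 0 ≤ r)
    (hf : ∀ n, ‖coeff (n + 2) f‖ ≤ K * (‖coeff n f‖ + ‖coeff n (f ^ p)‖)) (N : ℕ) :
    truncNorm r (N + 2) f ≤ ‖coeff 0 f‖ + ‖coeff 1 f‖ * r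
      + r ^ 2 * K * (truncNorm r N f + truncNorm r N (f ^ p)) := by
  have hterm (n : ℕ) : ‖coeff (n + 2) f‖ * r ^ (n + 2) ≤
      r ^ 2 * K * (‖coeff n f‖ * r ^ n + ‖coeff n (f ^ p)‖ * r ^ n) :=
    calc ‖coeff (n + 2) f‖ * r ^ (n + 2)
        ≤ K * (‖coeff n f‖ + ‖coeff n (f ^ p)‖) * r ^ (n + 2) := by gcongr; exact hf n
      _ = _ := by ring
  have hsum := Finset.sum_le_sum fun n (_ : n ∈ Finset.range N) => hterm n
  rw [← Finset.mul_sum, Finset.sum_add_distrib] at hsum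
  simp only [truncNorm, Finset.sum_range_succ' _ (N + 1), Finset.sum_range_succ' _ N,
    add_assoc, one_add_one_eq_two, zero_add, pow_zero, pow_one, mul_one]
  linarith

theorem exists_truncNorm_le (hK : 0 ≤ K)
    (hf : ∀ n, ‖coeff (n + 2) f‖ ≤ K * (‖coeff n f‖ + ‖coeff n (f ^ p)‖)) :
    ∃ r B : ℝ, 0 < r ∧ ∀ N, truncNorm r N f ≤ B := by
  set B := ‖coeff 0 f‖ + ‖coeff 1 f‖ + 1 with hB
  have hB₀ : 0 ≤ B := by positivity
  set M := K * (B + B ^ p) with hM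
  have hM₀ : 0 ≤ M := by positivity
  let r := (1 + M)⁻¹
  have hr₀ : 0 < r := by positivity
  have hr₁ : r ≤ 1 := inv_le_one_of_one_le₀ (by linarith)
  have hsmall : r ^ 2 * K * (B + B ^ p) ≤ 1 :=
    calc r ^ 2 * K * (B + B ^ p) = r * (r * M) := by rw [hM]; ring
      _ ≤ r * (1 + M) := by gcongr; nlinarith
      _ = 1 := inv_mul_cancel₀ (by positivity)
  refine ⟨r, B, hr₀, fun N => ?_⟩
  induction N using Nat.twoStepInduction with
  | zero => simpa [truncNorm] using hB₀
  | one =>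
    simp only [truncNorm, Finset.sum_range_one, pow_zero, mul_one, hB]
    linarith [norm_nonneg (coeff 1 f)]
  | more N ih _ =>
    calc truncNorm r (N + 2) f
        ≤ ‖coeff 0 f‖ + ‖coeff 1 f‖ * r
          + r ^ 2 * K * (truncNorm r N f + truncNorm r N (f ^ p)) :=
          truncNorm_add_two_le hr₀.le hf N
      _ ≤ ‖coeff 0 f‖ + ‖coeff 1 f‖ * 1 + r ^ 2 * K * (B + B ^ p) := by
          gcongr
          exact (truncNorm_pow_le hr₀.le N p f).trans
            (pow_le_pow_left₀ (truncNorm_nonneg hr₀.le N f) ih p)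
      _ ≤ B := by linarith

end Majorant

section ProfileEquation

open PowerSeries
open scoped Topology

theorem norm_coeff_add_two_le {𝕜 : Type*} [RCLike 𝕜] {α : 𝕜} {p : ℕ} {f : 𝕜⟦X⟧}
    (hf : formalResidual α p f = 0) (n : ℕ) :
    ‖coeff (n + 2) f‖ ≤ (1 + ‖α‖) ^ 2 * (‖coeff n f‖ + ‖coeff n (f ^ p)‖) := by
  have hnorm (m : ℕ) : ‖(m : 𝕜) + α‖ ≤ (1 + ‖α‖) * (m + 2) := by
    have htri := norm_add_le (m : 𝕜) α
    rw [RCLike.norm_natCast] at htri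
    nlinarith [norm_nonneg α, mul_nonneg (norm_nonneg α) m.cast_nonneg]
  have hdenom : ‖(n + 2 : 𝕜) * (n + 3)‖ = (n + 2) * (n + 3) := by
    exact_mod_cast RCLike.norm_natCast (K := 𝕜) ((n + 2) * (n + 3))
  have hone : 1 ≤ (1 + ‖α‖) ^ 2 * ((n + 2) * (n + 3)) :=
    one_le_mul_of_one_le_of_one_le (one_le_pow₀ (by linarith [norm_nonneg α])) (by nlinarith)
  rw [(formalResidual_eq_zero_iff.1 hf).2 n, norm_div, hdenom, div_le_iff₀ (by positivity)]
  calc ‖(n + α) * (n + 1 + α) * coeff n f - coeff n (f ^ p)‖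
      ≤ ‖n + α‖ * ‖((n + 1 : ℕ) : 𝕜) + α‖ * ‖coeff n f‖ + 1 * ‖coeff n (f ^ p)‖ := by
        rw [one_mul, ← norm_mul, ← norm_mul, Nat.cast_succ]
        exact norm_sub_le _ _
    _ ≤ (1 + ‖α‖) * (n + 2) * ((1 + ‖α‖) * ((n + 1 : ℕ) + 2)) * ‖coeff n f‖
        + (1 + ‖α‖) ^ 2 * ((n + 2) * (n + 3)) * ‖coeff n (f ^ p)‖ := by
        gcongr
        exacts [hnorm n, hnorm (n + 1)]
    _ = (1 + ‖α‖) ^ 2 * (‖coeff n f‖ + ‖coeff n (f ^ p)‖) * ((n + 2) * (n + 3)) := by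
        push_cast
        ring

theorem exists_analyticAt_profileEq (p : ℕ) (c : ℝ) :
    ∃ u : ℝ → ℝ, AnalyticAt ℝ u 0 ∧ u 0 = c ∧ ∀ᶠ ρ in 𝓝[>] 0, ProfileEq p u ρ := by
  have hf := formalResidual_mk_profileCoeff (alphaP p) p c
  obtain ⟨r, B, hr, hB⟩ := exists_truncNorm_le (by positivity) (norm_coeff_add_two_le hf)
  obtain ⟨u, hu, huf⟩ := exists_analyticAt_taylorSeries_eq hr
    (fun n => (norm_coeff_mul_pow_le_truncNorm hr.le n _).trans (hB (n + 1))) 0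
  refine ⟨u, hu, ?_, (eventually_profileEq_iff_formalResidual_eq_zero hu).2 (huf ▸ hf)⟩
  rw [← constantCoeff_taylorSeries u 0, huf, ← coeff_zero_eq_constantCoeff_apply, coeff_mk,
    profileCoeff]

variable {p : ℕ} {u v : ℝ → ℝ}

theorem eventuallyEq_of_eventually_profileEq (hu : AnalyticAt ℝ u 0) (hv : AnalyticAt ℝ v 0)
    (h₀ : u 0 = v 0) (hu_eq : ∀ᶠ ρ in 𝓝[>] 0, ProfileEq p u ρ)
    (hv_eq : ∀ᶠ ρ in 𝓝[>] 0, ProfileEq p v ρ) : u =ᶠ[𝓝 0] v := by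
  rw [eventually_profileEq_iff_formalResidual_eq_zero hu] at hu_eq
  rw [eventually_profileEq_iff_formalResidual_eq_zero hv] at hv_eq
  refine (taylorSeries_eq_iff hu hv).1 (eq_of_formalResidual_eq_zero hu_eq hv_eq ?_)
  simpa only [coeff_zero_eq_constantCoeff_apply, constantCoeff_taylorSeries] using h₀

theorem deriv_zero_of_eventually_profileEq (hu : AnalyticAt ℝ u 0)
    (hu_eq : ∀ᶠ ρ in 𝓝[>] 0, ProfileEq p u ρ) : deriv u 0 = 0 := by
  rw [eventually_profileEq_iff_formalResidual_eq_zero hu] at hu_eq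
  simpa [coeff_taylorSeries] using (formalResidual_eq_zero_iff.1 hu_eq).1

theorem deriv_deriv_zero_of_eventually_profileEq (hu : AnalyticAt ℝ u 0)
    (hu_eq : ∀ᶠ ρ in 𝓝[>] 0, ProfileEq p u ρ) :
    deriv (deriv u) 0 = (alphaP p * (alphaP p + 1) * u 0 - u 0 ^ p) / 3 := by
  rw [eventually_profileEq_iff_formalResidual_eq_zero hu] at hu_eq
  have hcoeff := (formalResidual_eq_zero_iff.1 hu_eq).2 0
  simp only [coeff_taylorSeries, iteratedDeriv_succ, iteratedDeriv_zero, map_pow,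
    coeff_zero_eq_constantCoeff_apply, constantCoeff_taylorSeries, Nat.factorial_zero,
    Nat.factorial_two, Nat.cast_zero, Nat.cast_one, Nat.cast_ofNat, zero_add, div_one] at hcoeff
  linarith

theorem alphaP_mul_alphaP_add_one (hp : p ≠ 1) :
    alphaP p * (alphaP p + 1) = 2 * ((p : ℝ) + 1) / ((p : ℝ) - 1) ^ 2 := by
  have hp₁ : (p : ℝ) - 1 ≠ 0 := sub_ne_zero.2 (mod_cast hp)
  rw [alphaP]
  field

end ProfileEquation

theorem local_existence_at_zero_general (p : ℕ) (hp : p ≠ 1) (c : ℝ) :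
    (∃ ε : ℝ, 0 < ε ∧ ∃ u : ℝ → ℝ, AnalyticOnNhd ℝ u (Ioo (-ε) ε) ∧
      (∀ ρ ∈ Ioo (0 : ℝ) ε, ProfileEq p u ρ) ∧
      u 0 = c ∧ deriv u 0 = 0 ∧
      deriv (deriv u) 0 = (2 / 3) * (((p : ℝ) + 1) * c / ((p : ℝ) - 1) ^ 2 - c ^ p / 2)) ∧
    (∀ u₁ u₂ : ℝ → ℝ, AnalyticAt ℝ u₁ 0 → AnalyticAt ℝ u₂ 0 → u₁ 0 = c → u₂ 0 = c →
      (∃ ε₁ : ℝ, 0 < ε₁ ∧ ∀ ρ ∈ Ioo (0 : ℝ) ε₁, ProfileEq p u₁ ρ) →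
      (∃ ε₂ : ℝ, 0 < ε₂ ∧ ∀ ρ ∈ Ioo (0 : ℝ) ε₂, ProfileEq p u₂ ρ) →
      u₁ =ᶠ[nhds 0] u₂) := by
  constructor
  · obtain ⟨u, hu, h₀, hu_eq⟩ := exists_analyticAt_profileEq p c
    obtain ⟨δ, hδ, hu_ball⟩ := hu.exists_ball_analyticOnNhd
    obtain ⟨η, hη, hu_Ioo⟩ := mem_nhdsGT_iff_exists_Ioo_subset.1 hu_eq
    refine ⟨min δ η, lt_min hδ hη, u, hu_ball.mono ?_, fun ρ hρ => hu_Ioo ?_, h₀,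
      deriv_zero_of_eventually_profileEq hu hu_eq, ?_⟩
    · rw [Real.ball_eq_Ioo, zero_sub, zero_add]
      exact Ioo_subset_Ioo (neg_le_neg (min_le_left δ η)) (min_le_left δ η)
    · exact Ioo_subset_Ioo_right (min_le_right δ η) hρ
    · rw [deriv_deriv_zero_of_eventually_profileEq hu hu_eq, alphaP_mul_alphaP_add_one hp, h₀]
      ring
  · rintro u₁ u₂ hu₁ hu₂ h₁ h₂ ⟨ε₁, hε₁, hu₁_eq⟩ ⟨ε₂, hε₂, hu₂_eq⟩
    exact eventuallyEq_of_eventually_profileEq hu₁ hu₂ (h₁.trans h₂.symm)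
      (mem_of_superset (Ioo_mem_nhdsGT hε₁) hu₁_eq) (mem_of_superset (Ioo_mem_nhdsGT hε₂) hu₂_eq)

/-- For each `c` there is a solution of the profile equation,
real-analytic near `ρ = 0`, with `u(0) = c`, `u'(0) = 0` and
`u''(0) = (2/3)((p+1)c/(p-1)² - c^p/2)`; and any two such solutions coincide near `0`. -/
theorem local_existence_at_zero (p : ℕ) (hp_odd : Odd p) (hp : 7 ≤ p) (c : ℝ) :
    (∃ ε : ℝ, 0 < ε ∧ ∃ u : ℝ → ℝ, AnalyticOnNhd ℝ u (Ioo (-ε) ε) ∧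
      (∀ ρ ∈ Ioo (0 : ℝ) ε, ProfileEq p u ρ) ∧
      u 0 = c ∧ deriv u 0 = 0 ∧
      deriv (deriv u) 0 = (2 / 3) * (((p : ℝ) + 1) * c / ((p : ℝ) - 1) ^ 2 - c ^ p / 2)) ∧
    (∀ u₁ u₂ : ℝ → ℝ, AnalyticAt ℝ u₁ 0 → AnalyticAt ℝ u₂ 0 →
      u₁ 0 = c → u₂ 0 = c → deriv u₁ 0 = 0 → deriv u₂ 0 = 0 →
      (∃ ε₁ : ℝ, 0 < ε₁ ∧ ∀ ρ ∈ Ioo (0 : ℝ) ε₁, ProfileEq p u₁ ρ) →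
      (∃ ε₂ : ℝ, 0 < ε₂ ∧ ∀ ρ ∈ Ioo (0 : ℝ) ε₂, ProfileEq p u₂ ρ) →
      u₁ =ᶠ[nhds 0] u₂) := by
  obtain ⟨hex, huniq⟩ := local_existence_at_zero_general p (by lia) c
  exact ⟨hex, fun u₁ u₂ hu₁ hu₂ h₁ h₂ _ _ => huniq u₁ u₂ hu₁ hu₂ h₁ h₂⟩
end
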